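/- arXiv:1909.03180 — 3 statements merged into one kernel-verified Lean document; each statement's English description precedes it below -/
import Mathlib

section
/- Let q be a prime power, n ≥ 1, r ≥ 0 an integer, and f: F_q^n → Z a function such that for every direction γ (nonzero vector up to scaling) there exists a line E_γ in direction γ with Σ_{x ∈ E_γ} |f(x)| ≥ r. Then Σ_{x ∈ F_q^n} |f(x)|^n ≥ r^n / (2 − q^{-1})^n. -/
/-!
The method of multiplicities. Rescaling and rounding `|f|` gives multiplicities `M x` whose sum over
some line in every direction is at least `l (2 q - 1)`. If the linear conditions imposed by
vanishing to order `M x` at every `x` were fewer than the monomials of degree less than `l q`,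
some nonzero polynomial `P` of degree less than `l q` would satisfy all of them. For `|i| < l` the
`i`-th Hasse derivative of `P`, restricted to a line in direction `b`, then has more zeros than its
degree allows, so it is the zero polynomial; its leading term is the `i`-th Hasse derivative at `b`
of the top-degree form of `P`. Hence that form vanishes to order `l` on all of `F_q^n`, and it is
zero by the Schwartz-Zippel bound with multiplicities, a contradiction. Counting monomials gives
`(l q)^n ≤ ∑ x, (M x + n)^n`, and the lower-order terms disappear when `f` is scaled up to infinity.
-/

open Finset MvPolynomial
open scoped Polynomial

theorem exists_lt_of_degree_le {σ : Type*} {e i : σ →₀ ℕ} (hdeg : e.degree ≤ i.degree)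
    (hne : e ≠ i) : ∃ j, e j < i j := by
  by_contra! hle
  obtain ⟨d, rfl⟩ := exists_add_of_le (show i ≤ e from hle)
  have hd : d.degree = 0 := by
    rw [map_add] at hdeg
    omega
  simp [(Finsupp.degree_eq_zero_iff d).1 hd] at hne

section MvTaylor

variable {σ R S : Type*} [CommSemiring R] [CommSemiring S]

/-- The multivariate Taylor expansion `P(X + a)` of `P` at `a`. Its coefficients are the values at
`a` of the Hasse derivatives of `P`. -/
noncomputable def mvTaylor (a : σ → R) : MvPolynomial σ R →ₐ[R] MvPolynomial σ R :=
  aeval fun j => X j + C (a j)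

theorem mvTaylor_X (a : σ → R) (j : σ) : mvTaylor a (X j) = X j + C (a j) :=
  aeval_X _ j

theorem mvTaylor_C (a : σ → R) (r : R) : mvTaylor a (C r) = C r :=
  algHom_C _ r

theorem mvTaylor_zero (P : MvPolynomial σ R) : mvTaylor 0 P = P := by
  have : mvTaylor (0 : σ → R) = AlgHom.id R _ := by
    ext j
    simp [mvTaylor_X]
  rw [this, AlgHom.id_apply]

theorem mvTaylor_mvTaylor (a b : σ → R) (P : MvPolynomial σ R) :
    mvTaylor a (mvTaylor b P) = mvTaylor (a + b) P := by
  have : (mvTaylor a).comp (mvTaylor b) = mvTaylor (a + b) := by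
    ext j
    simp [mvTaylor_X, add_assoc]
  exact DFunLike.congr_fun this P

theorem map_mvTaylor (φ : R →+* S) (a : σ → R) (P : MvPolynomial σ R) :
    map φ (mvTaylor a P) = mvTaylor (φ ∘ a) (map φ P) := by
  induction P using MvPolynomial.induction_on with
  | C r => simp only [mvTaylor_C, map_C]
  | add P Q hP hQ => simp only [map_add, hP, hQ]
  | mul_X P j hP => simp only [map_mul, hP, mvTaylor_X, map_add, map_X, map_C, Function.comp_apply]

theorem coeff_prod_aeval_X [Fintype σ] (f : σ → R[X]) (i : σ →₀ ℕ) :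
    coeff i (∏ j, Polynomial.aeval (X j : MvPolynomial σ R) (f j)) = ∏ j, (f j).coeff (i j) := by
  classical
  have prod_eq_monomial (y : σ → ℕ) :
      ∏ j, (f j).coeff (y j) • (X j : MvPolynomial σ R) ^ y j =
        monomial (Finsupp.equivFunOnFinite.symm y) (∏ j, (f j).coeff (y j)) := by
    rw [monomial_eq, Finsupp.prod_fintype _ _ fun _ => pow_zero _]
    simp only [smul_eq_C_mul, prod_mul_distrib, map_prod, Finsupp.equivFunOnFinite_symm_apply_apply]
  simp only [Polynomial.aeval_eq_sum_range, prod_univ_sum, prod_eq_monomial, coeff_sum,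
    coeff_monomial]
  rw [sum_eq_single (⇑i)]
  · simp
  · intro y _ hy
    exact if_neg fun h => hy (by rw [← h]; rfl)
  · intro hi
    simp only [Fintype.mem_piFinset, mem_range, not_forall, not_lt] at hi
    obtain ⟨j, hj⟩ := hi
    rw [prod_eq_zero (mem_univ j) (Polynomial.coeff_eq_zero_of_natDegree_lt hj), ite_self]

theorem coeff_mvTaylor_monomial [Fintype σ] (a : σ → R) (e i : σ →₀ ℕ) (r : R) :
    coeff i (mvTaylor a (monomial e r)) =
      r * ∏ j, (Polynomial.taylor (a j) (Polynomial.X ^ e j)).coeff (i j) := by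
  rw [← coeff_prod_aeval_X, ← coeff_C_mul, mvTaylor, aeval_monomial,
    Finsupp.prod_fintype _ _ fun _ => pow_zero _]
  simp [algebraMap_eq]

theorem coeff_mvTaylor_of_totalDegree_le [Finite σ] (a : σ → R) {P : MvPolynomial σ R}
    {i : σ →₀ ℕ} (hi : P.totalDegree ≤ i.degree) : coeff i (mvTaylor a P) = coeff i P := by
  classical
  cases nonempty_fintype σ
  have coeff_monomial_eq (e : σ →₀ ℕ) (he : e ∈ P.support) (r : R) :
      coeff i (mvTaylor a (monomial e r)) = coeff i (monomial e r) := by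
    rw [coeff_mvTaylor_monomial, coeff_monomial]
    split_ifs with h
    · simp [h, Polynomial.coeff_X_add_C_pow]
    · obtain ⟨j, hj⟩ :=
        exists_lt_of_degree_le ((show e.degree ≤ _ from le_totalDegree he).trans hi) h
      rw [prod_eq_zero (mem_univ j), mul_zero]
      simp [Polynomial.coeff_X_add_C_pow, Nat.choose_eq_zero_of_lt hj]
  rw [P.as_sum, map_sum, coeff_sum, coeff_sum]
  exact sum_congr rfl fun e he => coeff_monomial_eq e he _

theorem homogeneousComponent_mvTaylor [Finite σ] (a : σ → R) {P : MvPolynomial σ R} {d : ℕ}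
    (hP : P.totalDegree ≤ d) :
    homogeneousComponent d (mvTaylor a P) = homogeneousComponent d P := by
  ext i
  simp only [coeff_homogeneousComponent]
  split_ifs with h
  · exact coeff_mvTaylor_of_totalDegree_le a (h ▸ hP)
  · rfl

theorem exists_mem_support_degree_eq_totalDegree {P : MvPolynomial σ R} (hP : P ≠ 0) :
    ∃ e ∈ P.support, e.degree = P.totalDegree :=
  (exists_mem_eq_sup P.support (support_nonempty.2 hP) Finsupp.degree).imp
    fun _ ⟨he, hdeg⟩ => ⟨he, hdeg.symm⟩

theorem homogeneousComponent_totalDegree_ne_zero {P : MvPolynomial σ R} (hP : P ≠ 0) :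
    homogeneousComponent P.totalDegree P ≠ 0 := by
  obtain ⟨e, he, hdeg⟩ := exists_mem_support_degree_eq_totalDegree hP
  refine ne_zero_iff.2 ⟨e, ?_⟩
  rw [coeff_homogeneousComponent, if_pos hdeg]
  exact mem_support_iff.1 he

/-- `P` vanishes at `a` with multiplicity at least `m`. -/
def VanishesToOrder (P : MvPolynomial σ R) (a : σ → R) (m : ℕ) : Prop :=
  ∀ i : σ →₀ ℕ, i.degree < m → coeff i (mvTaylor a P) = 0

theorem VanishesToOrder.zero_of_isHomogeneous [Finite σ] {P : MvPolynomial σ R} {d m : ℕ}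
    (hP : P.IsHomogeneous d) {b : σ → R} (hb : VanishesToOrder P b m) :
    VanishesToOrder P 0 m := by
  intro i hi
  rw [mvTaylor_zero]
  by_cases hid : i.degree = d
  · rw [← coeff_mvTaylor_of_totalDegree_le b (hP.totalDegree_le.trans_eq hid.symm), hb i hi]
  · exact hP.coeff_eq_zero hid

end MvTaylor

section Univariate

theorem sum_le_natDegree_of_X_sub_C_pow_dvd {R : Type*} [CommRing R] [IsDomain R] {p : R[X]}
    (hp : p ≠ 0) {T : Finset R} {m : R → ℕ}
    (h : ∀ t ∈ T, (Polynomial.X - Polynomial.C t) ^ m t ∣ p) : ∑ t ∈ T, m t ≤ p.natDegree := by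
  classical
  calc ∑ t ∈ T, m t ≤ ∑ t ∈ T, p.roots.count t := sum_le_sum fun t ht => by
        rw [Polynomial.count_roots]
        exact (Polynomial.le_rootMultiplicity_iff hp).2 (h t ht)
    _ ≤ ∑ t ∈ p.roots.toFinset, p.roots.count t :=
        sum_le_sum_of_ne_zero fun t _ ht => Multiset.mem_toFinset.2 (Multiset.count_ne_zero.1 ht)
    _ = p.roots.card := Multiset.toFinset_sum_count_eq _
    _ ≤ p.natDegree := p.card_roots'

theorem exists_coeff_eq_sum_coeff_taylor {K : Type*} [Field K] (S : Finset K) {k m : ℕ}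
    (hk : k < m * #S) :
    ∃ c : K × ℕ → K, ∀ p : K[X], p.natDegree ≤ k →
      p.coeff k = ∑ x ∈ S ×ˢ range m, c x * (Polynomial.taylor x.1 p).coeff x.2 := by
  let evalHasse (x : K × ℕ) : Polynomial.degreeLE K k →ₗ[K] K :=
    Polynomial.lcoeff K x.2 ∘ₗ Polynomial.taylor x.1 ∘ₗ Submodule.subtype _
  let top : Polynomial.degreeLE K k →ₗ[K] K := Polynomial.lcoeff K k ∘ₗ Submodule.subtype _
  have hker : ⨅ x : ↥(S ×ˢ range m), (evalHasse x).ker ≤ top.ker := by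
    rintro ⟨p, hp⟩ hvanish
    suffices p = 0 by simp [top, this]
    by_contra hp0
    have hdvd (s : K) (hs : s ∈ S) : (Polynomial.X - Polynomial.C s) ^ m ∣ p := by
      rw [Polynomial.X_sub_C_pow_dvd_iff, ← Polynomial.taylor_apply, Polynomial.X_pow_dvd_iff]
      intro j hj
      have := (Submodule.mem_iInf _).1 hvanish ⟨(s, j), mk_mem_product hs (mem_range.2 hj)⟩
      simpa [evalHasse] using this
    have hle := sum_le_natDegree_of_X_sub_C_pow_dvd hp0 hdvd
    rw [sum_const, smul_eq_mul, mul_comm] at hle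
    have := Polynomial.natDegree_le_iff_degree_le.2 (Polynomial.mem_degreeLE.1 hp)
    omega
  obtain ⟨c, hc⟩ := (Submodule.mem_span_range_iff_exists_fun K).1 (mem_span_of_iInf_ker_le_ker hker)
  refine ⟨Function.extend Subtype.val c 0, fun p hp => ?_⟩
  have hmem : p ∈ Polynomial.degreeLE K k :=
    Polynomial.mem_degreeLE.2 (Polynomial.natDegree_le_iff_degree_le.1 hp)
  rw [← sum_coe_sort]
  simpa [evalHasse, top, Subtype.val_injective.extend_apply] using
    (LinearMap.congr_fun hc ⟨p, hmem⟩).symm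

end Univariate

section Grid

theorem prod_sum_coeff_taylor_X_pow {σ R : Type*} [Fintype σ] [DecidableEq σ] [CommSemiring R]
    {e d : σ →₀ ℕ} {N : σ → Finset (R × ℕ)} {c : σ → R × ℕ → R}
    (hc : ∀ j, ∀ p : R[X], p.natDegree ≤ e j →
      p.coeff (e j) = ∑ x ∈ N j, c j x * (Polynomial.taylor x.1 p).coeff x.2)
    (hd : d.degree ≤ e.degree) :
    ∏ j, ∑ x ∈ N j, c j x * (Polynomial.taylor x.1 (Polynomial.X ^ d j)).coeff x.2 =
      if d = e then 1 else 0 := by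
  split_ifs with h
  · subst h
    refine prod_eq_one fun j _ => ?_
    rw [← hc j _ (Polynomial.natDegree_X_pow_le _), Polynomial.coeff_X_pow_self]
  · obtain ⟨j, hj⟩ := exists_lt_of_degree_le hd h
    refine prod_eq_zero (mem_univ j) ?_
    rw [← hc j _ ((Polynomial.natDegree_X_pow_le _).trans hj.le), Polynomial.coeff_X_pow,
      if_neg hj.ne']

variable {σ K : Type*} [Field K] [Finite σ]

theorem exists_coeff_eq_sum_coeff_mvTaylor {S : Finset K} (hS : S.Nonempty) (e : σ →₀ ℕ) :
    ∃ (N : Finset (σ → K × ℕ)) (c : (σ → K × ℕ) → K),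
      (∀ y ∈ N, (∀ j, (y j).1 ∈ S) ∧ ∀ j, (y j).2 * #S ≤ e j) ∧
      ∀ P : MvPolynomial σ K, P.totalDegree ≤ e.degree → coeff e P =
        ∑ y ∈ N, c y * coeff (Finsupp.equivFunOnFinite.symm fun j => (y j).2)
          (mvTaylor (fun j => (y j).1) P) := by
  classical
  cases nonempty_fintype σ
  choose c hc using fun j => exists_coeff_eq_sum_coeff_taylor S
    (k := e j) (m := e j / #S + 1) (Nat.lt_mul_of_div_lt (Nat.lt_succ_self _) hS.card_pos)
  refine ⟨Fintype.piFinset fun j => S ×ˢ range (e j / #S + 1), fun y => ∏ j, c j (y j), ?_,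
    fun P hP => ?_⟩
  · intro y hy
    simp only [Fintype.mem_piFinset, mem_product, mem_range, Nat.lt_succ_iff] at hy
    exact ⟨fun j => (hy j).1, fun j =>
      (Nat.mul_le_mul_right _ (hy j).2).trans (Nat.div_mul_le_self _ _)⟩
  have coeff_monomial_eq (e' : σ →₀ ℕ) (he' : e' ∈ P.support) (r : K) :
      coeff e (monomial e' r) =
        ∑ y ∈ Fintype.piFinset fun j => S ×ˢ range (e j / #S + 1), (∏ j, c j (y j)) *
          coeff (Finsupp.equivFunOnFinite.symm fun j => (y j).2)
            (mvTaylor (fun j => (y j).1) (monomial e' r)) := by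
    have := prod_sum_coeff_taylor_X_pow hc (show e'.degree ≤ _ from (le_totalDegree he').trans hP)
    rw [prod_univ_sum] at this
    rw [coeff_monomial, ← mul_boole, ← this, mul_sum]
    refine sum_congr rfl fun y _ => ?_
    rw [coeff_mvTaylor_monomial, prod_mul_distrib, mul_left_comm]
    rfl
  conv_lhs => rw [P.as_sum, coeff_sum]
  conv_rhs => rw [P.as_sum]
  simp only [map_sum, coeff_sum, mul_sum]
  rw [sum_comm]
  exact sum_congr rfl fun e' he' => coeff_monomial_eq e' he' _

theorem eq_zero_of_vanishesToOrder {S : Finset K} {P : MvPolynomial σ K}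
    {l : ℕ} (hdeg : P.totalDegree < l * #S)
    (hP : ∀ a : σ → K, (∀ j, a j ∈ S) → VanishesToOrder P a l) : P = 0 := by
  cases nonempty_fintype σ
  have hS : S.Nonempty := card_pos.1 (Nat.pos_of_mul_pos_left (Nat.zero_lt_of_lt hdeg))
  have coeff_eq_zero (e : σ →₀ ℕ) (he : e.degree = P.totalDegree) : coeff e P = 0 := by
    obtain ⟨N, c, hN, hc⟩ := exists_coeff_eq_sum_coeff_mvTaylor hS e
    rw [hc P he.ge]
    refine sum_eq_zero fun y hy => mul_eq_zero_of_right _ (hP _ (hN y hy).1 _ ?_)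
    refine lt_of_mul_lt_mul_of_nonneg_right ?_ (Nat.zero_le #S)
    calc (Finsupp.equivFunOnFinite.symm fun j => (y j).2).degree * #S
        = ∑ j, (y j).2 * #S := by rw [Finsupp.degree_eq_sum, sum_mul]; rfl
      _ ≤ ∑ j, e j := sum_le_sum fun j _ => (hN y hy).2 j
      _ < l * #S := by rwa [← Finsupp.degree_eq_sum, he]
  by_contra hP0
  obtain ⟨e, he, hdege⟩ := exists_mem_support_degree_eq_totalDegree hP0
  exact mem_support_iff.1 he (coeff_eq_zero e hdege)

end Grid

section Line

variable {σ R : Type*} [CommRing R] {P : MvPolynomial σ R} {a b : σ → R} {i : σ →₀ ℕ}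

/-- The Taylor coefficient of `P` of index `i` at the generic point `a + T b` of a line, that is,
the restriction to the line of the `i`-th Hasse derivative of `P`, as a polynomial in `T`. -/
noncomputable def lineTaylor (a b : σ → R) (i : σ →₀ ℕ) (P : MvPolynomial σ R) : R[X] :=
  coeff i (mvTaylor (fun j => Polynomial.C (a j) + Polynomial.X * Polynomial.C (b j))
    (map Polynomial.C P))

theorem lineTaylor_mvTaylor (c : σ → R) :
    lineTaylor a b i (mvTaylor c P) = lineTaylor (a + c) b i P := by
  have line_add : (fun j => Polynomial.C (a j) + Polynomial.X * Polynomial.C (b j)) +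
      Polynomial.C ∘ c = fun j => Polynomial.C ((a + c) j) + Polynomial.X * Polynomial.C (b j) := by
    funext j
    simp only [Pi.add_apply, Function.comp_apply, map_add]
    ring
  rw [lineTaylor, map_mvTaylor, mvTaylor_mvTaylor, line_add, lineTaylor]

theorem lineTaylor_add_smul_comp (t : R) :
    (lineTaylor (a + t • b) b i P).comp (Polynomial.X - Polynomial.C t) = lineTaylor a b i P := by
  let shift := Polynomial.compRingHom (Polynomial.X - Polynomial.C t)
  have shift_comp_C : shift.comp Polynomial.C = Polynomial.C := by
    ext1 r
    simp [shift]
  have shift_line : (shift ∘ fun j =>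
      Polynomial.C ((a + t • b) j) + Polynomial.X * Polynomial.C (b j)) =
        fun j => Polynomial.C (a j) + Polynomial.X * Polynomial.C (b j) := by
    funext j
    simp [shift]
    ring
  change shift (coeff i _) = _
  rw [← coeff_map, map_mvTaylor, MvPolynomial.map_map, shift_comp_C, shift_line,
    lineTaylor]

theorem coeff_lineTaylor_zero_monomial [Finite σ] (e : σ →₀ ℕ) (r : R) (k : ℕ) :
    (lineTaylor 0 b i (monomial e r)).coeff k =
      if e.degree = k + i.degree then coeff i (mvTaylor b (monomial e r)) else 0 := by
  cases nonempty_fintype σ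
  have lineTaylor_eq : lineTaylor 0 b i (monomial e r) =
      Polynomial.C (coeff i (mvTaylor b (monomial e r))) *
        Polynomial.X ^ ∑ j, (e j - i j) := by
    simp only [lineTaylor, coeff_mvTaylor_monomial, map_monomial, Pi.zero_apply, map_zero, zero_add,
      Polynomial.taylor_X_pow, Polynomial.coeff_X_add_C_pow]
    simp only [mul_pow, prod_mul_distrib, prod_pow_eq_pow_sum, map_mul, map_prod, map_pow,
      map_natCast]
    ring
  rw [lineTaylor_eq, Polynomial.coeff_C_mul_X_pow]
  by_cases hie : i ≤ e
  · obtain ⟨d, rfl⟩ := exists_add_of_le hie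
    simp only [Finsupp.add_apply, add_tsub_cancel_left, ← Finsupp.degree_eq_sum, map_add,
      add_comm k, add_right_inj, eq_comm]
  · obtain ⟨j, hj⟩ : ∃ j, e j < i j := by simpa [Finsupp.le_def] using hie
    have : coeff i (mvTaylor b (monomial e r)) = 0 := by
      rw [coeff_mvTaylor_monomial, prod_eq_zero (mem_univ j), mul_zero]
      simp [Polynomial.coeff_X_add_C_pow, Nat.choose_eq_zero_of_lt hj]
    simp only [this, ite_self]

theorem coeff_lineTaylor [Finite σ] (k : ℕ) :
    (lineTaylor a b i P).coeff k =
      coeff i (mvTaylor b (homogeneousComponent (k + i.degree) (mvTaylor a P))) := by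
  rw [← zero_add a, ← lineTaylor_mvTaylor, zero_add]
  induction mvTaylor a P using MvPolynomial.induction_on' with
  | monomial e r =>
    rw [coeff_lineTaylor_zero_monomial]
    split_ifs with h
    · rw [homogeneousComponent_of_mem (isHomogeneous_monomial r h), if_pos rfl]
    · rw [homogeneousComponent_of_mem (isHomogeneous_monomial r rfl), if_neg (Ne.symm h)]
      simp
  | add P Q hP hQ =>
    simp only [lineTaylor, map_add, coeff_add, Polynomial.coeff_add] at hP hQ ⊢
    rw [hP, hQ]

theorem natDegree_lineTaylor_add_degree_le [Finite σ] (h : lineTaylor a b i P ≠ 0) :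
    (lineTaylor a b i P).natDegree + i.degree ≤ P.totalDegree := by
  by_contra! hlt
  have hlead := Polynomial.leadingCoeff_ne_zero.2 h
  rw [Polynomial.leadingCoeff, coeff_lineTaylor, homogeneousComponent_mvTaylor _ hlt.le,
    homogeneousComponent_eq_zero _ _ hlt, map_zero, coeff_zero] at hlead
  exact hlead rfl

theorem VanishesToOrder.X_sub_C_pow_dvd_lineTaylor [Finite σ] {t : R} {m : ℕ}
    (h : VanishesToOrder P (a + t • b) m) :
    (Polynomial.X - Polynomial.C t) ^ (m - i.degree) ∣ lineTaylor a b i P := by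
  rw [← lineTaylor_add_smul_comp t, ← Polynomial.X_pow_comp]
  refine map_dvd (Polynomial.compRingHom (Polynomial.X - Polynomial.C t))
    (Polynomial.X_pow_dvd_iff.2 fun k hk => ?_)
  have hcomp : homogeneousComponent (k + i.degree) (mvTaylor (a + t • b) P) = 0 := by
    ext d
    rw [coeff_homogeneousComponent, coeff_zero, ite_eq_right_iff]
    exact fun hd => h d (by omega)
  rw [coeff_lineTaylor, hcomp, map_zero, coeff_zero]

theorem lineTaylor_eq_zero [Finite σ] [IsDomain R] {T : Finset R} {M : R → ℕ}
    (hM : ∀ t ∈ T, VanishesToOrder P (a + t • b) (M t))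
    (hdeg : P.totalDegree + #T * i.degree < ∑ t ∈ T, M t + i.degree) :
    lineTaylor a b i P = 0 := by
  by_contra h0
  have hroots : ∑ t ∈ T, (M t - i.degree) ≤ (lineTaylor a b i P).natDegree :=
    sum_le_natDegree_of_X_sub_C_pow_dvd h0 fun t ht => (hM t ht).X_sub_C_pow_dvd_lineTaylor
  have hsum : ∑ t ∈ T, M t ≤ ∑ t ∈ T, (M t - i.degree) + #T * i.degree := by
    rw [← smul_eq_mul, ← sum_const, ← sum_add_distrib]
    exact sum_le_sum fun t _ => le_tsub_add
  have := natDegree_lineTaylor_add_degree_le h0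
  omega

theorem coeff_mvTaylor_homogeneousComponent_eq_zero [Finite σ] (h : lineTaylor a b i P = 0) :
    coeff i (mvTaylor b (homogeneousComponent P.totalDegree P)) = 0 := by
  cases nonempty_fintype σ
  rcases le_or_gt i.degree P.totalDegree with hi | hi
  · rw [← homogeneousComponent_mvTaylor a le_rfl, ← Nat.sub_add_cancel hi, ← coeff_lineTaylor, h,
      Polynomial.coeff_zero]
  · have hdeg := (homogeneousComponent_isHomogeneous P.totalDegree P).totalDegree_le
    rw [coeff_mvTaylor_of_totalDegree_le _ (hdeg.trans hi.le), coeff_homogeneousComponent,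
      if_neg hi.ne']

end Line

section Interpolation

variable {σ K : Type*} [Field K]

/-- The exponents of the monomials of degree less than `D`. -/
noncomputable def exponentsLT (σ : Type*) [Finite σ] (D : ℕ) : Finset (σ →₀ ℕ) :=
  (Finsupp.finite_of_degree_lt D).toFinset

theorem mem_exponentsLT [Finite σ] {D : ℕ} {e : σ →₀ ℕ} : e ∈ exponentsLT σ D ↔ e.degree < D := by
  simp [exponentsLT]

theorem factorial_mul_card_exponentsLT [Fintype σ] [Nonempty σ] (D : ℕ) :
    (Fintype.card σ).factorial * #(exponentsLT σ D) = D.ascFactorial (Fintype.card σ) := by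
  classical
  have exponentsLT_eq : exponentsLT σ D = (range D).biUnion (finsuppAntidiag univ) := by
    ext e
    simp [mem_exponentsLT, mem_finsuppAntidiag, Finsupp.degree_eq_sum]
  have hdisj : (range D : Set ℕ).PairwiseDisjoint (finsuppAntidiag (univ : Finset σ)) :=
    fun k _ l _ hkl => disjoint_left.2 fun e hk hl =>
      hkl ((mem_finsuppAntidiag.1 hk).1.symm.trans (mem_finsuppAntidiag.1 hl).1)
  rw [exponentsLT_eq, card_biUnion hdisj]
  simp only [card_finsuppAntidiag_nat_eq_multichoose, card_univ]
  cases D with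
  | zero =>
    obtain ⟨n, hn⟩ := Nat.exists_eq_add_one.2 (Fintype.card_pos (α := σ))
    rw [hn, Nat.zero_ascFactorial, range_zero, sum_empty, mul_zero]
  | succ D => rw [Nat.sum_range_multichoose, Nat.ascFactorial_eq_factorial_mul_choose]

theorem exists_ne_zero_forall_vanishesToOrder [Finite σ] {D : ℕ} {A : Finset (σ → K)}
    {M : (σ → K) → ℕ} (h : ∑ x ∈ A, #(exponentsLT σ (M x)) < #(exponentsLT σ D)) :
    ∃ P : MvPolynomial σ K, P ≠ 0 ∧ P.totalDegree < D ∧ ∀ x ∈ A, VanishesToOrder P x (M x) := by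
  let V := restrictSupport K (exponentsLT σ D : Set (σ →₀ ℕ))
  let basisV := basisRestrictSupport K (exponentsLT σ D : Set (σ →₀ ℕ))
  let conditions := A.sigma fun x => exponentsLT σ (M x)
  let taylorCoeffs : V →ₗ[K] conditions → K :=
    LinearMap.pi fun s => lcoeff K s.1.2 ∘ₗ (mvTaylor s.1.1).toLinearMap ∘ₗ V.subtype
  have : FiniteDimensional K V := basisV.finiteDimensional_of_finite
  have hker : taylorCoeffs.ker ≠ ⊥ := by
    apply LinearMap.ker_ne_bot_of_finrank_lt
    rw [Module.finrank_fintype_fun_eq_card, Fintype.card_coe, card_sigma,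
      Module.finrank_eq_card_basis basisV]
    simpa using h
  obtain ⟨⟨P, hPV⟩, hP, hP0⟩ := (Submodule.ne_bot_iff _).1 hker
  have hP0 : P ≠ 0 := fun h => hP0 (Subtype.ext h)
  refine ⟨P, hP0, ?_, fun x hx i hi => ?_⟩
  · obtain ⟨e, he, hdeg⟩ := exists_mem_support_degree_eq_totalDegree hP0
    exact hdeg.symm.trans_lt (mem_exponentsLT.1 ((mem_restrictSupport_iff K).1 hPV he))
  · exact congrFun hP ⟨⟨x, i⟩, mem_sigma.2 ⟨hx, mem_exponentsLT.2 hi⟩⟩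

end Interpolation

section Kakeya

variable {F σ : Type*} [Field F] [Fintype F] [Fintype σ] [DecidableEq σ] [Nonempty σ]

theorem card_exponentsLT_le_sum (M : (σ → F) → ℕ) (l : ℕ)
    (hline : ∀ b : σ → F, b ≠ 0 → ∃ a : σ → F,
      l * (2 * Fintype.card F - 1) ≤ ∑ t : F, M (a + t • b)) :
    #(exponentsLT σ (l * Fintype.card F)) ≤ ∑ x, #(exponentsLT σ (M x)) := by
  by_contra! hlt
  obtain ⟨P, hP0, hdeg, hP⟩ := exists_ne_zero_forall_vanishesToOrder hlt
  set H := homogeneousComponent P.totalDegree P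
  have hH : H.IsHomogeneous P.totalDegree := homogeneousComponent_isHomogeneous _ _
  have vanishes_of_ne_zero (b : σ → F) (hb : b ≠ 0) : VanishesToOrder H b l := by
    intro i hi
    obtain ⟨a, ha⟩ := hline b hb
    refine coeff_mvTaylor_homogeneousComponent_eq_zero (a := a)
      (lineTaylor_eq_zero (T := univ) (fun t _ => hP (a + t • b) (mem_univ _)) ?_)
    -- The restricted derivative has degree less than `l q - |i|` and at least `l (2 q - 1) - q |i|`
    -- zeros, which is no less than `l q - |i|` as `|i| ≤ l`.
    obtain ⟨c, hc⟩ := Nat.exists_eq_add_one.2 (Fintype.card_pos (α := F))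
    have hci : c * i.degree ≤ c * l := Nat.mul_le_mul_left _ hi.le
    rw [card_univ, hc]
    rw [hc] at hdeg ha
    have hl : l * (2 * (c + 1) - 1) = l * (c + 1) + c * l := by
      rw [show 2 * (c + 1) - 1 = c + 1 + c by omega, mul_add, mul_comm c]
    linarith
  have vanishes (b : σ → F) : VanishesToOrder H b l := by
    rcases eq_or_ne b 0 with rfl | hb
    · exact (vanishes_of_ne_zero 1 one_ne_zero).zero_of_isHomogeneous hH
    · exact vanishes_of_ne_zero b hb
  exact homogeneousComponent_totalDegree_ne_zero hP0 <| eq_zero_of_vanishesToOrder (S := univ)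
    (hH.totalDegree_le.trans_lt hdeg) fun b _ => vanishes b

theorem pow_mul_card_le_sum_add_card_pow (M : (σ → F) → ℕ) (l : ℕ)
    (hline : ∀ b : σ → F, b ≠ 0 → ∃ a : σ → F,
      l * (2 * Fintype.card F - 1) ≤ ∑ t : F, M (a + t • b)) :
    (l * Fintype.card F) ^ Fintype.card σ ≤ ∑ x, (M x + Fintype.card σ) ^ Fintype.card σ := by
  calc (l * Fintype.card F) ^ Fintype.card σ
      ≤ (l * Fintype.card F).ascFactorial (Fintype.card σ) := Nat.pow_succ_le_ascFactorial _ _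
    _ = (Fintype.card σ).factorial * #(exponentsLT σ (l * Fintype.card F)) :=
        (factorial_mul_card_exponentsLT _).symm
    _ ≤ (Fintype.card σ).factorial * ∑ x, #(exponentsLT σ (M x)) :=
        Nat.mul_le_mul_left _ (card_exponentsLT_le_sum M l hline)
    _ = ∑ x, (M x).ascFactorial (Fintype.card σ) := by
        simp only [mul_sum, factorial_mul_card_exponentsLT]
    _ ≤ ∑ x, (M x + Fintype.card σ) ^ Fintype.card σ := sum_le_sum fun x _ => by
        rw [Nat.ascFactorial_eq_prod_range]
        refine (prod_le_pow_card _ _ (M x + Fintype.card σ) fun i hi => ?_).trans_eq (by simp)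
        exact Nat.add_le_add_left (mem_range.1 hi).le _

theorem floor_mul_le_sum_ceil {ι : Type*} {s : Finset ι} {g : ι → ℝ} {r k : ℝ} (hr : 0 ≤ r)
    (hk : 0 ≤ k) (h : r ≤ ∑ i ∈ s, g i) (m : ℕ) :
    ⌊r * k⌋₊ * m ≤ ∑ i ∈ s, ⌈m * g i * k⌉₊ := by
  have : (⌊r * k⌋₊ : ℝ) * m ≤ ∑ i ∈ s, (⌈m * g i * k⌉₊ : ℝ) :=
    calc (⌊r * k⌋₊ : ℝ) * m ≤ r * k * m := by
          gcongr
          exact Nat.floor_le (mul_nonneg hr hk)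
      _ ≤ (∑ i ∈ s, g i) * k * m := by gcongr
      _ = ∑ i ∈ s, m * g i * k := by rw [← sum_mul, ← mul_sum, mul_right_comm, mul_comm (m : ℝ)]
      _ ≤ ∑ i ∈ s, (⌈m * g i * k⌉₊ : ℝ) := sum_le_sum fun i _ => Nat.le_ceil _
  exact_mod_cast this

open Filter Topology in
theorem pow_mul_card_le_sum_pow {g : (σ → F) → ℝ} (hg : ∀ x, 0 ≤ g x) {r : ℝ} (hr : 0 ≤ r)
    (hline : ∀ b : σ → F, b ≠ 0 → ∃ a : σ → F, r ≤ ∑ t : F, g (a + t • b)) :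
    (r * Fintype.card F) ^ Fintype.card σ ≤
      ∑ x, ((2 * Fintype.card F - 1 : ℕ) * g x) ^ Fintype.card σ := by
  set q := Fintype.card F
  set n := Fintype.card σ
  set m := 2 * q - 1
  have tendsto_left :
      Tendsto (fun k : ℝ => (⌊r * k⌋₊ / k * q) ^ n) atTop (𝓝 ((r * q) ^ n)) :=
    ((tendsto_nat_floor_mul_div_atTop hr).mul_const (q : ℝ)).pow n
  have tendsto_right : Tendsto (fun k : ℝ => ∑ x, (⌈m * g x * k⌉₊ / k + n / k) ^ n)
      atTop (𝓝 (∑ x, (m * g x + 0) ^ n)) :=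
    tendsto_finsetSum _ fun x _ =>
      ((tendsto_nat_ceil_mul_div_atTop (mul_nonneg m.cast_nonneg (hg x))).add
        (tendsto_const_nhds.div_atTop tendsto_id)).pow n
  simp only [add_zero] at tendsto_right
  refine le_of_tendsto_of_tendsto tendsto_left tendsto_right ?_
  filter_upwards [eventually_gt_atTop 0] with k hk
  have hbound := pow_mul_card_le_sum_add_card_pow (fun x => ⌈m * g x * k⌉₊) ⌊r * k⌋₊
    fun b hb => (hline b hb).imp fun a ha => floor_mul_le_sum_ceil hr hk.le ha m
  have hbound_real : (⌊r * k⌋₊ * q : ℝ) ^ n ≤ ∑ x, (⌈m * g x * k⌉₊ + n : ℝ) ^ n := by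
    exact_mod_cast hbound
  simp only [← add_div, div_mul_eq_mul_div, div_pow, ← sum_div]
  gcongr

end Kakeya

theorem norm_bound_lines_general {F σ : Type*} [Field F] [Fintype F] [Fintype σ] [DecidableEq σ]
    [Nonempty σ] (f : (σ → F) → ℝ) {r : ℝ} (hr : 0 ≤ r)
    (hline : ∀ γ : σ → F, γ ≠ 0 → ∃ a : σ → F, r ≤ ∑ t : F, |f (a + t • γ)|) :
    r ^ Fintype.card σ / (2 - (Fintype.card F : ℝ)⁻¹) ^ Fintype.card σ ≤
      ∑ x, |f x| ^ Fintype.card σ := by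
  have hq : 0 < Fintype.card F := Fintype.card_pos
  have hm : 0 < 2 * Fintype.card F - 1 := by omega
  have hden : 2 - (Fintype.card F : ℝ)⁻¹ = (2 * Fintype.card F - 1 : ℕ) / Fintype.card F := by
    rw [Nat.cast_sub (by omega)]
    push_cast
    field_simp
  have hbound := pow_mul_card_le_sum_pow (fun x => abs_nonneg (f x)) hr hline
  simp only [mul_pow _ |f _|, ← mul_sum] at hbound
  rw [← div_pow, hden, div_div_eq_mul_div, div_pow, div_le_iff₀' (pow_pos (mod_cast hm) _)]
  exact hbound

/-- Norm bound for functions with large line sums: if `f : F_q^n → ℤ` is such that in every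
direction `γ` there is a line `E_γ` in direction `γ` with `Σ_{x ∈ E_γ} |f(x)| ≥ r`, then
`Σ_x |f(x)|^n ≥ r^n / (2 − q^{-1})^n`. -/
theorem norm_bound_lines {F : Type*} [Field F] [Fintype F] (q n : ℕ) (r : ℕ)
    (hq : Fintype.card F = q) (hn : 1 ≤ n)
    (f : (Fin n → F) → ℤ)
    (hline : ∀ γ : Fin n → F, γ ≠ 0 → ∃ a : Fin n → F,
      (r : ℤ) ≤ ∑ t : F, |f (a + t • γ)|) :
    (r : ℝ) ^ n / (2 - (q : ℝ)⁻¹) ^ n ≤ ∑ x : Fin n → F, (|f x| : ℝ) ^ n := by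
  have : Nonempty (Fin n) := ⟨⟨0, hn⟩⟩
  simpa [hq] using norm_bound_lines_general (fun x => (f x : ℝ)) r.cast_nonneg
    fun γ hγ => (hline γ hγ).imp fun a ha => mod_cast ha
end

section
/- Let q be a prime power and n, k, m positive integers with m ≤ q^k and k dividing n. Then every (k,m)-Furstenberg set S ⊆ F_q^n satisfies |S| ≥ 2^{−n/k} · m^{n/k}. -/
/-!
Regard the ambient space over the extension `K` of degree `k`. The `K`-lines are `k`-dimensional
over the base field, so `S` has a rich line in every `K`-direction. With `q = |K|` and `r` the
dimension over `K`, put `M = r (m + q - 1)` and `N = m r q`. If `S` were too small, linear algebra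
would give a polynomial `P ≠ 0` of degree `< N` vanishing to order `M` on `S`. Expand `P` at the
generic point `v + t b` of a rich line: each Taylor coefficient of order `j < m r` is a polynomial
in `t` of degree `≤ deg P - j` with `m` zeros of order `M - j`, hence zero, and so is its top
coefficient, which is a Taylor coefficient at `b` of the leading form of `P`. The leading form
thus vanishes to order `m r` at every `b`, so by the Schwartz–Zippel lemma with multiplicities its
degree is at least `m r q = N`, a contradiction.
-/

namespace Furstenberg

open MvPolynomial
open Module (finrank)

section TaylorShift

variable {σ K R : Type*} [CommRing K] [CommRing R] [Algebra K R]

/-- The Taylor expansion `P(X + c)` of `P` at a point `c` of an extension `R` of the coefficient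
ring. Its coefficient at `X ^ α` is the value at `c` of the `α`-th Hasse derivative of `P`. -/
noncomputable def taylorShift (c : σ → R) : MvPolynomial σ K →ₐ[K] MvPolynomial σ R :=
  aeval fun i => X i + C (c i)

@[simp]
lemma taylorShift_X (c : σ → R) (i : σ) :
    taylorShift c (X i : MvPolynomial σ K) = X i + C (c i) :=
  aeval_X _ i

@[simp]
lemma taylorShift_C (c : σ → R) (a : K) :
    taylorShift c (C a : MvPolynomial σ K) = C (algebraMap K R a) :=
  aeval_C _ a

lemma taylorShift_taylorShift (c : σ → R) (a : σ → K) (P : MvPolynomial σ K) :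
    taylorShift c (taylorShift a P) = taylorShift (fun i => algebraMap K R (a i) + c i) P := by
  suffices (taylorShift c).comp (taylorShift a) = taylorShift fun i => algebraMap K R (a i) + c i
    from DFunLike.congr_fun this P
  refine algHom_ext fun i => ?_
  rw [AlgHom.comp_apply, taylorShift_X, map_add, taylorShift_X, taylorShift_C, taylorShift_X,
    C_add, add_assoc, add_comm (C (c i))]

section Fintype

variable [Fintype σ]

lemma coeff_prod_X_add_C_pow (c : σ → R) (α β : σ →₀ ℕ) :
    coeff α (∏ i, (X i + C (c i)) ^ β i) = ∏ i, (c i ^ (β i - α i) * (β i).choose (α i)) := by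
  classical
  have expand : ∏ i, (X i + C (c i)) ^ β i =
      ∑ γ ∈ Fintype.piFinset fun i => Finset.range (β i + 1),
        monomial (Finsupp.equivFunOnFinite.symm γ)
          (∏ i, (c i ^ (β i - γ i) * ((β i).choose (γ i) : R))) := by
    simp_rw [add_pow, Finset.prod_univ_sum]
    refine Finset.sum_congr rfl fun γ _ => ?_
    rw [monomial_eq, Finsupp.prod_fintype _ _ fun i => pow_zero _, mul_comm, map_prod,
      ← Finset.prod_mul_distrib]
    simp [mul_assoc]
  rw [expand, coeff_sum, Finset.sum_eq_single (α : σ → ℕ)]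
  · rw [Finsupp.equivFunOnFinite_symm_coe, coeff_monomial, if_pos rfl]
  · intro γ _ hγ
    rw [coeff_monomial, if_neg]
    rintro rfl
    exact hγ rfl
  · intro hα
    obtain ⟨i, hi⟩ : ∃ i, β i < α i := by simpa using hα
    rw [Finsupp.equivFunOnFinite_symm_coe, coeff_monomial, if_pos rfl]
    exact Finset.prod_eq_zero (Finset.mem_univ i) (by simp [Nat.choose_eq_zero_of_lt hi])

lemma coeff_taylorShift (c : σ → R) (P : MvPolynomial σ K) (α : σ →₀ ℕ) :
    coeff α (taylorShift c P) = ∑ β ∈ P.support,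
      algebraMap K R (coeff β P) * ∏ i, (c i ^ (β i - α i) * (β i).choose (α i)) := by
  rw [taylorShift, aeval_def, eval₂_eq', coeff_sum]
  refine Finset.sum_congr rfl fun β _ => ?_
  rw [IsScalarTower.algebraMap_apply K R (MvPolynomial σ R), algebraMap_eq, coeff_C_mul,
    coeff_prod_X_add_C_pow]

lemma prod_pow_mul_choose_eq_zero (c : σ → R) {α β : σ →₀ ℕ} (h : ¬α ≤ β) :
    ∏ i, (c i ^ (β i - α i) * ((β i).choose (α i) : R)) = 0 := by
  obtain ⟨i, hi⟩ : ∃ i, β i < α i := by simpa [Finsupp.le_def] using h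
  exact Finset.prod_eq_zero (Finset.mem_univ i) (by simp [Nat.choose_eq_zero_of_lt hi])

end Fintype

lemma pow_dvd_coeff_taylorShift_mul [Finite σ] {M : ℕ} {P : MvPolynomial σ K}
    (hP : ∀ β : σ →₀ ℕ, β.degree < M → coeff β P = 0) (u : R) (c : σ → R) (α : σ →₀ ℕ) :
    u ^ (M - α.degree) ∣ coeff α (taylorShift (fun i => u * c i) P) := by
  cases nonempty_fintype σ
  rw [coeff_taylorShift]
  refine Finset.dvd_sum fun β hβ => Dvd.dvd.mul_left ?_ _
  have hM : M ≤ β.degree := not_lt.mp fun h => mem_support_iff.mp hβ (hP β h)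
  have hdeg : β.degree ≤ ∑ i, (β i - α i) + α.degree := by
    rw [Finsupp.degree_eq_sum, Finsupp.degree_eq_sum, ← Finset.sum_add_distrib]
    exact Finset.sum_le_sum fun i _ => by omega
  calc u ^ (M - α.degree) ∣ u ^ ∑ i, (β i - α i) := pow_dvd_pow u (by omega)
    _ = ∏ i, u ^ (β i - α i) := (Finset.prod_pow_eq_pow_sum _ _ _).symm
    _ ∣ _ := Finset.prod_dvd_prod_of_dvd _ _ fun i _ => by
        rw [mul_pow, mul_assoc]
        exact dvd_mul_right _ _

end TaylorShift

section VanishingOrder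

variable {σ K : Type*} [CommRing K]

/-- The multiplicity with which `P` vanishes at `a`, equal to `⊤` when `P = 0`. -/
noncomputable def vanishingOrder (a : σ → K) (P : MvPolynomial σ K) : ℕ∞ :=
  (taylorShift a P : MvPowerSeries σ K).order

lemma coeff_taylorShift_eq_zero {a : σ → K} {P : MvPolynomial σ K} {α : σ →₀ ℕ}
    (h : (α.degree : ℕ∞) < vanishingOrder a P) : coeff α (taylorShift a P) = 0 := by
  rw [← coeff_coe]
  exact MvPowerSeries.coeff_of_lt_order h

lemma le_vanishingOrder {n : ℕ∞} {a : σ → K} {P : MvPolynomial σ K}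
    (h : ∀ α : σ →₀ ℕ, (α.degree : ℕ∞) < n → coeff α (taylorShift a P) = 0) :
    n ≤ vanishingOrder a P :=
  MvPowerSeries.le_order fun α hα => by rw [coeff_coe, h α hα]

lemma vanishingOrder_eq_zero {a : σ → K} {P : MvPolynomial σ K}
    (h : constantCoeff (taylorShift a P) ≠ 0) : vanishingOrder a P = 0 := by
  have := MvPowerSeries.order_le (f := (taylorShift a P : MvPowerSeries σ K)) (d := 0)
    (by rwa [coeff_coe])
  simpa [vanishingOrder] using this

lemma vanishingOrder_mul [NoZeroDivisors K] (a : σ → K) (P Q : MvPolynomial σ K) :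
    vanishingOrder a (P * Q) = vanishingOrder a P + vanishingOrder a Q := by
  rw [vanishingOrder, map_mul, coe_mul, MvPowerSeries.order_mul, vanishingOrder, vanishingOrder]

lemma vanishingOrder_X_sub_C_self [Nontrivial K] (a : σ → K) (i : σ) :
    vanishingOrder a (X i - C (a i)) = 1 := by
  classical
  rw [vanishingOrder, map_sub, taylorShift_X, taylorShift_C, Algebra.algebraMap_self_apply,
    add_sub_cancel_right, X, coe_monomial, MvPowerSeries.order_monomial_of_ne_zero one_ne_zero,
    Finsupp.degree_single, Nat.cast_one]

lemma vanishingOrder_prod_X_sub_C [IsDomain K] {a : σ → K} {i : σ} {T : Finset K}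
    (h : a i ∈ T) : vanishingOrder a (∏ s ∈ T, (X i - C s)) = 1 := by
  classical
  have hrest : vanishingOrder a (∏ s ∈ T.erase (a i), (X i - C s)) = 0 := by
    refine vanishingOrder_eq_zero ?_
    rw [map_prod, map_prod, Finset.prod_ne_zero_iff]
    intro s hs
    simpa [sub_eq_zero] using (Finset.ne_of_mem_erase hs).symm
  rw [← Finset.mul_prod_erase T _ h, vanishingOrder_mul, vanishingOrder_X_sub_C_self, hrest,
    add_zero]

end VanishingOrder

section EvalHead

variable {K : Type*} [CommRing K] {r : ℕ}

/-- The restriction of `P` to the hyperplane `X 0 = s`. -/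
noncomputable def evalHead (s : K) : MvPolynomial (Fin (r + 1)) K →ₐ[K] MvPolynomial (Fin r) K :=
  aeval (Fin.cons (C s) X)

lemma evalHead_eq_eval_finSuccEquiv (s : K) (P : MvPolynomial (Fin (r + 1)) K) :
    evalHead s P = (finSuccEquiv K r P).eval (C s) := by
  induction P using MvPolynomial.induction_on with
  | C a => simp [evalHead, finSuccEquiv_apply]
  | add P Q hP hQ => rw [map_add, map_add, Polynomial.eval_add, hP, hQ]
  | mul_X P i hP =>
    rw [map_mul, map_mul, Polynomial.eval_mul, hP]
    congr 1
    cases i using Fin.cases <;> simp [evalHead, finSuccEquiv_X_zero, finSuccEquiv_X_succ]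

lemma totalDegree_evalHead_le (s : K) (P : MvPolynomial (Fin (r + 1)) K) :
    (evalHead s P).totalDegree ≤ P.totalDegree := by
  rw [evalHead_eq_eval_finSuccEquiv, Polynomial.eval_eq_sum]
  refine totalDegree_finsetSum_le fun i hi => ?_
  calc ((finSuccEquiv K r P).coeff i * C s ^ i).totalDegree
    _ ≤ ((finSuccEquiv K r P).coeff i).totalDegree := by
        refine (totalDegree_mul _ _).trans ?_
        rw [← C_pow, totalDegree_C, add_zero]
    _ ≤ P.totalDegree := (Nat.le_add_right _ i).trans
        (totalDegree_coeff_finSuccEquiv_add_le P i (Polynomial.mem_support_iff.mp hi))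

lemma coeff_evalHead_zero (P : MvPolynomial (Fin (r + 1)) K) (α : Fin r →₀ ℕ) :
    coeff α (evalHead 0 P) = coeff (Finsupp.cons 0 α) P := by
  rw [evalHead_eq_eval_finSuccEquiv, C_0, ← Polynomial.coeff_zero_eq_eval_zero,
    finSuccEquiv_coeff_coeff]

lemma taylorShift_evalHead (s : K) (a : Fin r → K) (P : MvPolynomial (Fin (r + 1)) K) :
    taylorShift a (evalHead s P) = evalHead 0 (taylorShift (Fin.cons s a) P) := by
  suffices (taylorShift a).comp (evalHead s) = (evalHead 0).comp (taylorShift (Fin.cons s a))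
    from DFunLike.congr_fun this P
  refine algHom_ext fun i => ?_
  cases i using Fin.cases <;> simp [evalHead]

lemma vanishingOrder_le_vanishingOrder_evalHead (s : K) (a : Fin r → K)
    (P : MvPolynomial (Fin (r + 1)) K) :
    vanishingOrder (Fin.cons s a) P ≤ vanishingOrder a (evalHead s P) := by
  refine le_vanishingOrder fun α hα => ?_
  rw [taylorShift_evalHead, coeff_evalHead_zero]
  refine coeff_taylorShift_eq_zero ?_
  rwa [Finsupp.degree_eq_sum, Fin.sum_univ_succ, Finsupp.cons_zero, zero_add,
    Finset.sum_congr rfl fun i _ => Finsupp.cons_succ i 0 α, ← Finsupp.degree_eq_sum]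

lemma prod_X_zero_sub_C_dvd [IsDomain K] {T : Finset K} {P : MvPolynomial (Fin (r + 1)) K}
    (hP : P ≠ 0) (h : ∀ s ∈ T, evalHead s P = 0) : ∏ s ∈ T, (X 0 - C s) ∣ P := by
  classical
  have hdvd : ∏ x ∈ T.image C, (Polynomial.X - Polynomial.C x) ∣ finSuccEquiv K r P := by
    rw [Finset.prod, Multiset.prod_X_sub_C_dvd_iff_le_roots (by simpa using hP),
      Finset.val_le_iff_val_subset]
    intro x hx
    obtain ⟨s, hs, rfl⟩ := Finset.mem_image.mp hx
    rw [Polynomial.mem_roots (by simpa using hP), Polynomial.IsRoot,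
      ← evalHead_eq_eval_finSuccEquiv, h s hs]
  rw [Finset.prod_image fun _ _ _ _ h => C_injective _ _ h] at hdvd
  have hC (s : K) : finSuccEquiv K r (C s) = Polynomial.C (C s) := (finSuccEquiv K r).commutes s
  rw [← map_dvd_iff (finSuccEquiv K r), map_prod]
  simpa only [map_sub, finSuccEquiv_X_zero, hC] using hdvd

end EvalHead

lemma totalDegree_prod_X_sub_C {σ K : Type*} [CommRing K] [IsDomain K] (i : σ) (T : Finset K) :
    (∏ s ∈ T, (X i - C s : MvPolynomial σ K)).totalDegree = T.card := by
  classical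
  have hlin (s : K) : (X i - C s : MvPolynomial σ K).totalDegree = 1 := by
    rw [sub_eq_add_neg, totalDegree_add_eq_left_of_totalDegree_lt, totalDegree_X]
    rw [totalDegree_neg, totalDegree_C, totalDegree_X]
    exact one_pos
  have hne (s : K) : (X i - C s : MvPolynomial σ K) ≠ 0 := fun h => by simpa [h] using hlin s
  induction T using Finset.induction_on with
  | empty => simp
  | insert s T hs ih =>
    rw [Finset.prod_insert hs, Finset.card_insert_of_notMem hs, totalDegree_mul_of_isDomain (hne s)
      (Finset.prod_ne_zero_iff.mpr fun s _ => hne s), hlin, ih, add_comm]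

theorem mul_card_le_totalDegree {K : Type*} [CommRing K] [IsDomain K] (T : Finset K) {r : ℕ}
    {l : ℕ} {P : MvPolynomial (Fin r) K} (hP : P ≠ 0)
    (h : ∀ a : Fin r → K, (∀ i, a i ∈ T) → l ≤ vanishingOrder a P) :
    l * T.card ≤ P.totalDegree := by
  -- If some restriction to `X 0 = s` is nonzero, the dimension drops; otherwise `P` is divisible
  -- by `∏ s ∈ T, (X 0 - s)`, of degree `#T` and multiplicity `1` at every point of the grid.
  induction r generalizing l with
  | zero =>
    obtain ⟨c, rfl⟩ := C_surjective (Fin 0) P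
    have hl := h 0 finZeroElim
    rw [vanishingOrder_eq_zero (by simpa using hP)] at hl
    simp_all
  | succ r ihr =>
    induction l generalizing P with
    | zero => simp
    | succ l ihl =>
      by_cases hrestrict : ∃ s ∈ T, evalHead s P ≠ 0
      · obtain ⟨s, hs, hne⟩ := hrestrict
        refine (ihr hne fun a ha => ?_).trans (totalDegree_evalHead_le s P)
        exact (h (Fin.cons s a) (Fin.cases hs ha)).trans
          (vanishingOrder_le_vanishingOrder_evalHead s a P)
      · push Not at hrestrict
        obtain ⟨Q, rfl⟩ := prod_X_zero_sub_C_dvd hP hrestrict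
        have hQ : l * T.card ≤ Q.totalDegree := ihl (right_ne_zero_of_mul hP) fun a ha => by
          have hPa := h a ha
          rw [vanishingOrder_mul, vanishingOrder_prod_X_sub_C (ha 0), Nat.cast_succ,
            add_comm] at hPa
          exact (ENat.add_le_add_iff_left ENat.one_ne_top).mp hPa
        rw [totalDegree_mul_of_isDomain (left_ne_zero_of_mul hP) (right_ne_zero_of_mul hP),
          totalDegree_prod_X_sub_C]
        linarith

section AffineLine

lemma coeff_prod_sum_of_natDegree_le {ι R : Type*} [CommSemiring R] (s : Finset ι)
    (f : ι → Polynomial R) (n : ι → ℕ) (h : ∀ i ∈ s, (f i).natDegree ≤ n i) :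
    (∏ i ∈ s, f i).coeff (∑ i ∈ s, n i) = ∏ i ∈ s, (f i).coeff (n i) := by
  classical
  induction s using Finset.induction_on with
  | empty => simp
  | insert a s ha ih =>
    rw [Finset.forall_mem_insert] at h
    rw [Finset.prod_insert ha, Finset.sum_insert ha, Finset.prod_insert ha,
      Polynomial.coeff_mul_add_eq_of_natDegree_le h.1, ih h.2]
    exact (Polynomial.natDegree_prod_le _ _).trans (Finset.sum_le_sum h.2)

lemma mul_card_le_natDegree {K : Type*} [CommRing K] [IsDomain K] {T : Finset K} {e : ℕ}
    {g : Polynomial K} (hg : g ≠ 0)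
    (h : ∀ s ∈ T, (Polynomial.X - Polynomial.C s) ^ e ∣ g) : e * T.card ≤ g.natDegree := by
  classical
  have hroots : e • T.val ≤ g.roots := by
    refine Multiset.le_iff_count.mpr fun s => ?_
    rw [Multiset.count_nsmul, Polynomial.count_roots]
    by_cases hs : s ∈ T
    · rw [Multiset.count_eq_one_of_mem T.nodup hs, mul_one]
      exact (Polynomial.le_rootMultiplicity_iff hg).mpr (h s hs)
    · simp [Multiset.count_eq_zero_of_notMem hs]
  simpa using (Multiset.card_le_card hroots).trans g.card_roots'

variable {σ K : Type*} [CommRing K]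

/-- The line `t ↦ v + t b`, as a point with coordinates in `K[t]`. -/
noncomputable def affineLine (v b : σ → K) : σ → Polynomial K :=
  fun i => Polynomial.C (v i) + Polynomial.X * Polynomial.C (b i)

lemma natDegree_affineLine_pow_mul_choose_le (v b : σ → K) (α β : σ →₀ ℕ) (i : σ) :
    (affineLine v b i ^ (β i - α i) * ((β i).choose (α i) : Polynomial K)).natDegree ≤
      β i - α i := by
  rw [affineLine]
  compute_degree

lemma coeff_affineLine_pow_mul_choose (v b : σ → K) (α β : σ →₀ ℕ) (i : σ) :
    (affineLine v b i ^ (β i - α i) * ((β i).choose (α i) : Polynomial K)).coeff (β i - α i) =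
      b i ^ (β i - α i) * (β i).choose (α i) := by
  rw [← Polynomial.C_eq_natCast, Polynomial.coeff_mul_C]
  have h := Polynomial.coeff_pow_of_natDegree_le (p := affineLine v b i) (n := 1)
    (m := β i - α i) (by rw [affineLine]; compute_degree)
  rw [mul_one] at h
  rw [h]
  simp [affineLine]

section Fintype

variable [Fintype σ]

lemma sum_tsub_eq_degree_tsub {α β : σ →₀ ℕ} (h : α ≤ β) :
    ∑ i, (β i - α i) = β.degree - α.degree := by
  rw [Finset.sum_tsub_distrib _ fun i _ => h i, Finsupp.degree_eq_sum, Finsupp.degree_eq_sum]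

lemma natDegree_prod_affineLine_pow_mul_choose_le (v b : σ → K) {α β : σ →₀ ℕ} (h : α ≤ β) :
    (∏ i, (affineLine v b i ^ (β i - α i) * ((β i).choose (α i) : Polynomial K))).natDegree ≤
      β.degree - α.degree := by
  rw [← sum_tsub_eq_degree_tsub h]
  exact (Polynomial.natDegree_prod_le _ _).trans
    (Finset.sum_le_sum fun i _ => natDegree_affineLine_pow_mul_choose_le v b α β i)

lemma coeff_prod_affineLine_pow_mul_choose (v b : σ → K) {α β : σ →₀ ℕ} (h : α ≤ β) :
    (∏ i, (affineLine v b i ^ (β i - α i) * ((β i).choose (α i) : Polynomial K))).coeff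
      (β.degree - α.degree) = ∏ i, (b i ^ (β i - α i) * ((β i).choose (α i) : K)) := by
  rw [← sum_tsub_eq_degree_tsub h, coeff_prod_sum_of_natDegree_le _ _ _ fun i _ =>
    natDegree_affineLine_pow_mul_choose_le v b α β i]
  exact Finset.prod_congr rfl fun i _ => coeff_affineLine_pow_mul_choose v b α β i

end Fintype

variable [Finite σ]

lemma X_sub_C_pow_dvd_coeff_taylorShift_affineLine {M : ℕ} {v b : σ → K} {s : K}
    {P : MvPolynomial σ K} (hP : M ≤ vanishingOrder (v + s • b) P) (α : σ →₀ ℕ) :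
    (Polynomial.X - Polynomial.C s) ^ (M - α.degree) ∣
      coeff α (taylorShift (affineLine v b) P) := by
  have hline : affineLine v b = fun i => algebraMap K (Polynomial K) ((v + s • b) i) +
      (Polynomial.X - Polynomial.C s) * Polynomial.C (b i) := by
    funext i
    simp only [affineLine, Polynomial.algebraMap_eq, Pi.add_apply, Pi.smul_apply, smul_eq_mul,
      map_add, map_mul]
    ring
  rw [hline, ← taylorShift_taylorShift fun i => (Polynomial.X - Polynomial.C s) *
    Polynomial.C (b i)]
  exact pow_dvd_coeff_taylorShift_mul
    (fun β hβ => coeff_taylorShift_eq_zero ((Nat.cast_lt.mpr hβ).trans_le hP)) _ _ α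

lemma natDegree_coeff_taylorShift_affineLine_le (v b : σ → K) (P : MvPolynomial σ K)
    (α : σ →₀ ℕ) :
    (coeff α (taylorShift (affineLine v b) P)).natDegree ≤ P.totalDegree - α.degree := by
  cases nonempty_fintype σ
  rw [coeff_taylorShift]
  refine Polynomial.natDegree_sum_le_of_forall_le _ _ fun β hβ => ?_
  by_cases hαβ : α ≤ β
  · exact (Polynomial.natDegree_C_mul_le _ _).trans <|
      (natDegree_prod_affineLine_pow_mul_choose_le v b hαβ).trans <|
        Nat.sub_le_sub_right (le_totalDegree hβ) _
  · simp [prod_pow_mul_choose_eq_zero _ hαβ]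

lemma coeff_coeff_taylorShift_affineLine (v b : σ → K) (P : MvPolynomial σ K) (α : σ →₀ ℕ) :
    (coeff α (taylorShift (affineLine v b) P)).coeff (P.totalDegree - α.degree) =
      coeff α (taylorShift b (homogeneousComponent P.totalDegree P)) := by
  classical
  cases nonempty_fintype σ
  rw [coeff_taylorShift, coeff_taylorShift, support_homogeneousComponent, Finset.sum_filter,
    Polynomial.finsetSum_coeff]
  refine Finset.sum_congr rfl fun β hβ => ?_
  by_cases hαβ : α ≤ β
  swap
  · simp [prod_pow_mul_choose_eq_zero _ hαβ]
  rw [Polynomial.algebraMap_eq, Polynomial.coeff_C_mul, coeff_homogeneousComponent]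
  split_ifs with hβP
  · rw [← hβP, coeff_prod_affineLine_pow_mul_choose v b hαβ, Algebra.algebraMap_self_apply]
  · have hβ_le : β.degree ≤ P.totalDegree := le_totalDegree hβ
    have hα_le : α.degree ≤ β.degree := Finsupp.degree_mono hαβ
    have hdeg := natDegree_prod_affineLine_pow_mul_choose_le v b hαβ
    rw [Polynomial.coeff_eq_zero_of_natDegree_lt (by omega), mul_zero]

lemma coeff_taylorShift_homogeneousComponent_eq_zero [IsDomain K] {M : ℕ} {v b : σ → K}
    {T : Finset K} {P : MvPolynomial σ K} (hP : ∀ s ∈ T, M ≤ vanishingOrder (v + s • b) P)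
    {α : σ →₀ ℕ} (hα : P.totalDegree - α.degree < (M - α.degree) * T.card) :
    coeff α (taylorShift b (homogeneousComponent P.totalDegree P)) = 0 := by
  rw [← coeff_coeff_taylorShift_affineLine v b]
  suffices coeff α (taylorShift (affineLine v b) P) = 0 by rw [this, Polynomial.coeff_zero]
  by_contra hne
  have hcard := mul_card_le_natDegree hne fun s hs =>
    X_sub_C_pow_dvd_coeff_taylorShift_affineLine (hP s hs) α
  exact absurd (hcard.trans (natDegree_coeff_taylorShift_affineLine_le v b P α)) (not_le.mpr hα)

end AffineLine

section LeadingForm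

variable {σ K : Type*} [CommSemiring K] {P : MvPolynomial σ K}

lemma exists_mem_support_degree_eq_totalDegree (hP : P ≠ 0) :
    ∃ β ∈ P.support, β.degree = P.totalDegree := by
  obtain ⟨β, hβ, hdeg⟩ :=
    Finset.exists_mem_eq_sup P.support (support_nonempty.mpr hP) fun s => s.sum fun _ e => e
  exact ⟨β, hβ, hdeg.symm⟩

lemma homogeneousComponent_totalDegree_ne_zero (hP : P ≠ 0) :
    homogeneousComponent P.totalDegree P ≠ 0 := by
  obtain ⟨β, hβ, hdeg⟩ := exists_mem_support_degree_eq_totalDegree hP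
  refine ne_zero_iff.mpr ⟨β, ?_⟩
  rwa [coeff_homogeneousComponent, if_pos hdeg, ← mem_support_iff]

end LeadingForm

section Interpolation

/-- The exponents of the monomials of total degree less than `N`. -/
noncomputable def degreeLT (σ : Type*) [Finite σ] (N : ℕ) : Finset (σ →₀ ℕ) :=
  (Finsupp.finite_of_degree_lt N).toFinset

variable {σ : Type*}

@[simp]
lemma mem_degreeLT [Finite σ] {N : ℕ} {α : σ →₀ ℕ} : α ∈ degreeLT σ N ↔ α.degree < N :=
  Set.Finite.mem_toFinset _

lemma card_degreeLT_mul_factorial [Fintype σ] {N : ℕ} (hN : N ≠ 0) :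
    (degreeLT σ N).card * (Fintype.card σ).factorial = N.ascFactorial (Fintype.card σ) := by
  classical
  obtain ⟨N, rfl⟩ := Nat.exists_eq_succ_of_ne_zero hN
  have hunion : degreeLT σ (N + 1) =
      (Finset.range (N + 1)).biUnion (Finset.finsuppAntidiag Finset.univ) := by
    ext α
    simp [Finset.mem_finsuppAntidiag, Finsupp.degree_eq_sum]
  have hdisj : ∀ i ∈ Finset.range (N + 1), ∀ j ∈ Finset.range (N + 1), i ≠ j →
      Disjoint (Finset.finsuppAntidiag (Finset.univ : Finset σ) i)
        (Finset.finsuppAntidiag Finset.univ j) := fun i _ j _ hij =>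
    Finset.disjoint_left.mpr fun α hi hj =>
      hij ((Finset.mem_finsuppAntidiag.mp hi).1.symm.trans (Finset.mem_finsuppAntidiag.mp hj).1)
  rw [Nat.succ_eq_add_one, hunion, Finset.card_biUnion hdisj]
  simp only [Finset.card_finsuppAntidiag_nat_eq_multichoose, Finset.card_univ]
  rw [Nat.sum_range_multichoose, Nat.ascFactorial_eq_factorial_mul_choose, mul_comm]

lemma exists_ne_zero_forall_le_vanishingOrder [Finite σ] {K : Type*} [Field K]
    (S : Finset (σ → K)) {M N : ℕ} (hcard : S.card * (degreeLT σ M).card < (degreeLT σ N).card) :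
    ∃ P : MvPolynomial σ K, P ≠ 0 ∧ P.totalDegree < N ∧ ∀ a ∈ S, M ≤ vanishingOrder a P := by
  let b := basisRestrictSupport K (degreeLT σ N : Set (σ →₀ ℕ))
  have := Module.Finite.of_basis b
  let conditions : restrictSupport K (degreeLT σ N : Set (σ →₀ ℕ)) →ₗ[K]
      (S × degreeLT σ M → K) :=
    LinearMap.pi fun x => lcoeff K (x.2 : σ →₀ ℕ) ∘ₗ (taylorShift (x.1 : σ → K)).toLinearMap ∘ₗ
      Submodule.subtype _
  have hker : LinearMap.ker conditions ≠ ⊥ := by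
    apply LinearMap.ker_ne_bot_of_finrank_lt
    rw [Module.finrank_eq_card_basis b]
    simpa using hcard
  obtain ⟨⟨P, hPN⟩, hP, hP0⟩ := (Submodule.ne_bot_iff _).mp hker
  have hP0 : P ≠ 0 := fun h => hP0 (Subtype.ext h)
  refine ⟨P, hP0, ?_, fun a ha => le_vanishingOrder fun α hα => ?_⟩
  · obtain ⟨β, hβ, hdeg⟩ := exists_mem_support_degree_eq_totalDegree hP0
    exact hdeg ▸ mem_degreeLT.mp ((mem_restrictSupport_iff K).mp hPN hβ)
  · exact congrFun (LinearMap.mem_ker.mp hP)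
      (⟨a, ha⟩, ⟨α, mem_degreeLT.mpr (Nat.cast_lt.mp hα)⟩)

end Interpolation

section FurstenbergSets

open Classical in
/-- `S` is a `(k, m)`-Furstenberg set: every direction space `W` of dimension `k` has a translate
`v + W` containing at least `m` points of `S`. -/
def IsFurstenberg (K : Type*) {V : Type*} [Ring K] [AddCommGroup V] [Module K V] (k m : ℕ)
    (S : Finset V) : Prop :=
  ∀ W : Submodule K V, finrank K W = k → ∃ v : V, m ≤ (S.filter (fun x => x - v ∈ W)).card

section Ring

variable {F V V' : Type*} [Ring F] [AddCommGroup V] [Module F V] [AddCommGroup V'] [Module F V']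

lemma IsFurstenberg.map {k m : ℕ} {S : Finset V} (hS : IsFurstenberg F k m S) (e : V ≃ₗ[F] V') :
    IsFurstenberg F k m (S.map e.toEquiv.toEmbedding) := by
  classical
  intro W hW
  obtain ⟨v, hv⟩ := hS (W.map (e.symm : V' →ₗ[F] V)) ((e.symm.finrank_map_eq W).trans hW)
  refine ⟨e v, hv.trans_eq ?_⟩
  rw [Finset.filter_map, Finset.card_map]
  congr! 2 with x
  simp [Submodule.mem_map_equiv]

end Ring

lemma IsFurstenberg.extendScalars {F : Type*} (K : Type*) {V : Type*} [Field F] [Field K]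
    [Algebra F K] [AddCommGroup V] [Module F V] [Module K V] [IsScalarTower F K V] {j m : ℕ}
    {S : Finset V} (hS : IsFurstenberg F (finrank F K * j) m S) : IsFurstenberg K j m S :=
  fun W hW => hS (W.restrictScalars F) (by rw [← hW]; exact (Module.finrank_mul_finrank F K W).symm)

section Lines

variable {K V : Type*} [Field K] [AddCommGroup V] [Module K V] {m : ℕ} {S : Finset V}

lemma IsFurstenberg.exists_line_of_ne_zero (hS : IsFurstenberg K 1 m S) {b : V} (hb : b ≠ 0) :
    ∃ (v : V) (T : Finset K), m ≤ T.card ∧ ∀ s ∈ T, v + s • b ∈ S := by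
  classical
  obtain ⟨v, hv⟩ := hS (K ∙ b) (finrank_span_singleton hb)
  have hinj : Function.Injective fun s : K => v + s • b :=
    (add_right_injective v).comp (smul_left_injective K hb)
  refine ⟨v, S.preimage (fun s : K => v + s • b) hinj.injOn, hv.trans ?_,
    fun s hs => by simpa using hs⟩
  rw [← Finset.card_image_of_injective _ hinj]
  refine Finset.card_le_card fun x hx => ?_
  obtain ⟨hxS, hxW⟩ := Finset.mem_filter.mp hx
  obtain ⟨s, hs⟩ := Submodule.mem_span_singleton.mp hxW
  have hx : v + s • b = x := by rw [hs, add_sub_cancel]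
  exact Finset.mem_image.mpr ⟨s, Finset.mem_preimage.mpr (hx ▸ hxS), hx⟩

lemma IsFurstenberg.exists_line [Nontrivial V] (hS : IsFurstenberg K 1 m S) (b : V) :
    ∃ (v : V) (T : Finset K), m ≤ T.card ∧ ∀ s ∈ T, v + s • b ∈ S := by
  rcases ne_or_eq b 0 with hb | rfl
  · exact hS.exists_line_of_ne_zero hb
  -- For `b = 0` the line is a single point of `S`; the parameters come from another direction.
  obtain ⟨b, hb⟩ := exists_ne (0 : V)
  obtain ⟨v, T, hT, hTS⟩ := hS.exists_line_of_ne_zero hb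
  rcases T.eq_empty_or_nonempty with rfl | ⟨s₀, hs₀⟩
  · exact ⟨0, ∅, hT, by simp⟩
  · exact ⟨v + s₀ • b, T, hT, fun s _ => by simpa using hTS s₀ hs₀⟩

end Lines

section Bound

lemma tsub_lt_mul_of_lt {m t q d j c : ℕ} (hd : d < m * t * q) (hj : j < m * t) (hc : m ≤ c) :
    d - j < (t * (m + q - 1) - j) * c := by
  obtain ⟨q, rfl⟩ : ∃ q', q = q' + 1 := Nat.exists_eq_succ_of_ne_zero (by rintro rfl; simp at hd)
  obtain ⟨e, he⟩ : ∃ e, m * t = j + 1 + e := Nat.exists_eq_add_of_le hj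
  have hM : t * (m + (q + 1) - 1) - j = 1 + e + t * q := by
    rw [← add_assoc, Nat.add_sub_cancel, mul_add, mul_comm t m]
    omega
  have hm : 1 ≤ m := Nat.pos_of_ne_zero (by rintro rfl; simp at hj)
  calc d - j < m * t * q + (1 + e) := by
        rw [mul_add_one] at hd
        omega
    _ ≤ m * t * q + (1 + e) * m := by gcongr; exact Nat.le_mul_of_pos_right _ hm
    _ = (1 + e + t * q) * m := by ring
    _ ≤ (t * (m + (q + 1) - 1) - j) * c := by rw [hM]; gcongr

variable {K : Type*} [Field K] [Fintype K] {r m : ℕ} [NeZero r] {S : Finset (Fin r → K)}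

lemma IsFurstenberg.le_vanishingOrder_homogeneousComponent (hS : IsFurstenberg K 1 m S) {t : ℕ}
    {P : MvPolynomial (Fin r) K} (hd : P.totalDegree < m * t * Fintype.card K)
    (hP : ∀ a ∈ S, (t * (m + Fintype.card K - 1) : ℕ) ≤ vanishingOrder a P) (b : Fin r → K) :
    (m * t : ℕ) ≤ vanishingOrder b (homogeneousComponent P.totalDegree P) := by
  obtain ⟨v, T, hT, hTS⟩ := hS.exists_line b
  exact le_vanishingOrder fun α hα => coeff_taylorShift_homogeneousComponent_eq_zero
    (fun s hs => hP _ (hTS s hs)) (tsub_lt_mul_of_lt hd (Nat.cast_lt.mp hα) hT)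

lemma IsFurstenberg.card_degreeLT_le (hS : IsFurstenberg K 1 m S) (t : ℕ) :
    (degreeLT (Fin r) (m * t * Fintype.card K)).card ≤
      S.card * (degreeLT (Fin r) (t * (m + Fintype.card K - 1))).card := by
  by_contra! hlt
  obtain ⟨P, hP0, hd, hP⟩ := exists_ne_zero_forall_le_vanishingOrder S hlt
  have hzeros : m * t * Fintype.card K ≤
      (homogeneousComponent P.totalDegree P).totalDegree :=
    mul_card_le_totalDegree Finset.univ (homogeneousComponent_totalDegree_ne_zero hP0)
      fun b _ => hS.le_vanishingOrder_homogeneousComponent hd hP b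
  have hdegree : (homogeneousComponent P.totalDegree P).totalDegree ≤ P.totalDegree :=
    (homogeneousComponent_isHomogeneous _ P).totalDegree_le
  omega

lemma IsFurstenberg.mul_card_pow_le (hS : IsFurstenberg K 1 m S) :
    (m * Fintype.card K) ^ r ≤ S.card * (m + Fintype.card K) ^ r := by
  set q := Fintype.card K
  have hr : 0 < r := NeZero.pos r
  have hq : 0 < q := Fintype.card_pos
  rcases m.eq_zero_or_pos with rfl | hm
  · simp [hr.ne']
  have hN : m * r * q ≠ 0 := by positivity
  obtain ⟨M, hM⟩ : ∃ M, r * (m + q - 1) = M + 1 :=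
    Nat.exists_eq_succ_of_ne_zero (Nat.mul_pos hr (by omega)).ne'
  have hMr : M + r ≤ r * (m + q) := by
    obtain ⟨p, hp⟩ : ∃ p, m + q = p + 1 := Nat.exists_eq_succ_of_ne_zero (by omega)
    rw [hp, Nat.add_sub_cancel] at hM
    rw [hp, mul_add_one]
    omega
  refine le_of_mul_le_mul_left ?_ (pow_pos hr r)
  calc r ^ r * (m * q) ^ r = (m * r * q) ^ r := by ring
    _ ≤ (m * r * q).ascFactorial r := Nat.pow_succ_le_ascFactorial _ _
    _ = (degreeLT (Fin r) (m * r * q)).card * r.factorial := by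
        simpa using (card_degreeLT_mul_factorial (σ := Fin r) hN).symm
    _ ≤ S.card * (degreeLT (Fin r) (M + 1)).card * r.factorial :=
        Nat.mul_le_mul_right _ (hM ▸ hS.card_degreeLT_le r)
    _ = S.card * (M + 1).ascFactorial r := by
        simpa [mul_assoc] using
          congrArg (S.card * ·) (card_degreeLT_mul_factorial (σ := Fin r) M.succ_ne_zero)
    _ ≤ S.card * (r * (m + q)) ^ r := Nat.mul_le_mul_left _
        ((Nat.ascFactorial_le_pow_add _ _).trans (Nat.pow_le_pow_left hMr r))
    _ = r ^ r * (S.card * (m + q) ^ r) := by rw [mul_pow, mul_left_comm]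

end Bound

end FurstenbergSets

end Furstenberg

open Furstenberg Module in
theorem furstenberg_bound_dvd_general {F V : Type*} [Field F] [Fintype F] [AddCommGroup V]
    [Module F V] {k m : ℕ} (hV : 0 < finrank F V) (hdvd : k ∣ finrank F V) {S : Finset V}
    (hS : IsFurstenberg F k m S) :
    ((m : ℝ) * Fintype.card F ^ k / (m + Fintype.card F ^ k)) ^ (finrank F V / k) ≤ S.card := by
  obtain ⟨r, hr⟩ := hdvd
  have hkr : 0 < k * r := hr ▸ hV
  have : NeZero k := ⟨(Nat.pos_of_mul_pos_right hkr).ne'⟩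
  have : NeZero r := ⟨(Nat.pos_of_mul_pos_left hkr).ne'⟩
  obtain ⟨p, hp⟩ := CharP.exists F
  have : Fact p.Prime := ⟨CharP.char_is_prime F p⟩
  let K := FiniteField.Extension F p k
  have := Fintype.ofFinite K
  have hK : finrank F K = k := FiniteField.finrank_extension F p k
  have hcard : Fintype.card K = Fintype.card F ^ k := by rw [card_eq_pow_finrank (K := F), hK]
  have : FiniteDimensional F V := .of_finrank_pos hV
  have e : V ≃ₗ[F] (Fin r → K) := LinearEquiv.ofFinrankEq _ _ (by
    rw [hr, finrank_pi_fintype, hK]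
    simp [mul_comm])
  have hSK : IsFurstenberg K 1 m (S.map e.toEquiv.toEmbedding) :=
    IsFurstenberg.extendScalars (F := F) K (by rw [hK, mul_one]; exact hS.map e)
  have hbound := hSK.mul_card_pow_le
  rw [hcard, Finset.card_map] at hbound
  rw [hr, Nat.mul_div_cancel_left r (NeZero.pos k), div_pow, div_le_iff₀ (by positivity)]
  exact_mod_cast hbound

open Classical in
/-- If `k` divides `n` and `m ≤ q^k`, then every `(k,m)`-Furstenberg set `S ⊆ F_q^n`
satisfies `|S| ≥ 2^{−n/k} · m^{n/k}`. -/
theorem furstenberg_bound_dvd {F : Type*} [Field F] [Fintype F] (q n k m : ℕ)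
    (hq : Fintype.card F = q) (hn : 0 < n) (hk : 0 < k) (hm : 0 < m)
    (hdvd : k ∣ n) (hmq : m ≤ q ^ k)
    (S : Finset (Fin n → F))
    (hFurst : ∀ W : Submodule F (Fin n → F), Module.finrank F W = k →
      ∃ v : Fin n → F, m ≤ (S.filter (fun x => x - v ∈ W)).card) :
    (1 / 2 : ℝ) ^ (n / k) * (m : ℝ) ^ (n / k) ≤ S.card := by
  have hgeneral := furstenberg_bound_dvd_general (by simpa) (by simpa) hFurst
  rw [Module.finrank_fin_fun, hq] at hgeneral
  have hm_le : (m : ℝ) ≤ q ^ k := by exact_mod_cast hmq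
  have hpos : (0 : ℝ) < m + q ^ k :=
    add_pos_of_pos_of_nonneg (Nat.cast_pos.mpr hm) (by positivity)
  have hhalf : 1 / 2 * (m : ℝ) ≤ m * q ^ k / (m + q ^ k) := by
    rw [le_div_iff₀ hpos]
    linarith [mul_le_mul_of_nonneg_left hm_le (Nat.cast_nonneg m)]
  rw [← mul_pow]
  exact (pow_le_pow_left₀ (by positivity) hhalf _).trans hgeneral
end

section
/- Let q be a prime power, n/2 < k < n, and q^{n−k} < m ≤ q^k. If S ⊆ F_q^n and L is a set of C(n,k)_q distinct k-flats each containing at least m points of S, then |S| ≥ (1 − q^{n−2k} − √(q^{n−k}/m)) · m · q^{n−k}. -/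
/-- The q-binomial coefficient `C(n,k)_q = ∏_{i=0}^{k-1} (q^{n-i} - 1)/(q^{k-i} - 1)`,
as a real number. -/
noncomputable def qBinom (q n k : ℕ) : ℝ :=
  ∏ i ∈ Finset.range k, ((q : ℝ) ^ (n - i) - 1) / ((q : ℝ) ^ (k - i) - 1)

/-!
Write `μ = |S| / q^(n-k)` for the average of `|S ∩ ℓ|` over the cosets `ℓ` of a `k`-dimensional
subspace. Summed over *all* `k`-flats, the squared deviation `(|S ∩ ℓ| - μ)²` is controlled by the
number of pairs of points of `S` on a common flat. The difference of two distinct points lies in at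
most a `q^(k-n)` fraction of the `k`-dimensional subspaces, since `GL(V)` is transitive on nonzero
vectors, and this gives `∑ (|S ∩ ℓ| - μ)² ≤ C(n,k)_q |S|`. Hence a family of `C(n,k)_q` flats with
at least `m` points each forces `(m - μ)² ≤ |S|` as soon as `μ ≤ m`. When `|S| ≤ m q^(n-k)` this
reads `m - μ ≤ √(m q^(n-k))`, which is the bound; otherwise there is nothing to prove.
-/

section Variance

open Finset

variable {α β : Type*} [DecidableEq β]

theorem sum_sq_card_fiber_eq_card_pairs [Fintype β] (S : Finset α) (f : α → β) :
    ∑ b, #{x ∈ S | f x = b} ^ 2 = #{p ∈ S ×ˢ S | f p.1 = f p.2} := by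
  rw [card_eq_sum_card_fiberwise (f := fun p ↦ f p.1) (t := univ) (fun _ _ ↦ mem_univ _)]
  refine sum_congr rfl fun b _ ↦ ?_
  rw [sq, ← card_product, ← filter_product, filter_filter]
  congr! 2 with p
  grind

theorem sum_sq_card_fiber_sub_mean [Fintype β] [Nonempty β] (S : Finset α) (f : α → β) :
    ∑ b, ((#{x ∈ S | f x = b} : ℝ) - #S / Fintype.card β) ^ 2 =
      #{p ∈ S ×ˢ S | f p.1 = f p.2} - (#S : ℝ) ^ 2 / Fintype.card β := by
  have first_moment : ∑ b, (#{x ∈ S | f x = b} : ℝ) = #S := by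
    exact_mod_cast (card_eq_sum_card_fiberwise (t := univ) fun _ _ ↦ mem_univ _).symm
  have second_moment : ∑ b, (#{x ∈ S | f x = b} : ℝ) ^ 2 = #{p ∈ S ×ˢ S | f p.1 = f p.2} := by
    exact_mod_cast sum_sq_card_fiber_eq_card_pairs S f
  simp only [sub_sq, sum_add_distrib, sum_sub_distrib, ← sum_mul, ← mul_sum, first_moment,
    second_moment, sum_const, card_univ, nsmul_eq_mul]
  field_simp
  ring

end Variance

section Grassmannian

open Module Finset

theorem exists_linearEquiv_apply_eq {K V : Type*} [DivisionRing K] [AddCommGroup V] [Module K V]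
    {v w : V} (hv : v ≠ 0) (hw : w ≠ 0) : ∃ g : V ≃ₗ[K] V, g v = w := by
  obtain ⟨g, hg⟩ := Submodule.exists_linearEquiv_restrict_eq
    ((LinearEquiv.toSpanNonzeroSingleton K V v hv).symm.trans
      (LinearEquiv.toSpanNonzeroSingleton K V w hw))
  refine ⟨g, ?_⟩
  have := hg (LinearEquiv.toSpanNonzeroSingleton K V v hv 1)
  rw [LinearEquiv.trans_apply, LinearEquiv.symm_apply_apply] at this
  simpa only [LinearEquiv.toSpanNonzeroSingleton_apply, one_smul] using this.symm

/-- The set of `k`-dimensional subspaces of a finite vector space, as a `Finset` so that it can be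
counted and summed over. -/
noncomputable def grassmannian (F V : Type*) [DivisionRing F] [AddCommGroup V] [Module F V]
    [Finite V] (k : ℕ) : Finset (Submodule F V) :=
  (Set.toFinite {W : Submodule F V | finrank F W = k}).toFinset

section DivisionRing

variable {F V : Type*} [DivisionRing F] [AddCommGroup V] [Module F V] [Finite V] {k : ℕ}

@[simp]
theorem mem_grassmannian {W : Submodule F V} : W ∈ grassmannian F V k ↔ finrank F W = k := by
  simp [grassmannian]

/-- A linearly independent `k`-tuple in a `k`-dimensional subspace `W` is the same thing as a
linearly independent `k`-tuple in the ambient space with span `W`. -/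
def linearIndependentEquivSpanEq {W : Submodule F V} (hW : finrank F W = k) :
    {s : Fin k → W // LinearIndependent F s} ≃
      {s : {s : Fin k → V // LinearIndependent F s} // Submodule.span F (Set.range s.1) = W} where
  toFun s := ⟨⟨fun i ↦ s.1 i, s.2.map' W.subtype W.ker_subtype⟩, by
    have span_eq_top := s.2.span_eq_top_of_card_eq_finrank' (by simp [hW])
    have := congrArg (Submodule.map W.subtype) span_eq_top
    rwa [Submodule.map_span, ← Set.range_comp, Submodule.map_subtype_top] at this⟩
  invFun s := ⟨fun i ↦ ⟨s.1.1 i, s.2.le (Submodule.subset_span ⟨i, rfl⟩)⟩,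
    .of_comp W.subtype s.1.2⟩

theorem card_linearIndependent_eq_card_grassmannian_mul [Fintype F] :
    Nat.card {s : Fin k → V // LinearIndependent F s} =
      #(grassmannian F V k) * ∏ i : Fin k, (Fintype.card F ^ k - Fintype.card F ^ i.val) := by
  let spanOf (s : {s : Fin k → V // LinearIndependent F s}) : grassmannian F V k :=
    ⟨Submodule.span F (Set.range s.1), by simp [finrank_span_eq_card s.2]⟩
  have card_fiber (W : grassmannian F V k) :
      Nat.card {s // spanOf s = W} =
        ∏ i : Fin k, (Fintype.card F ^ k - Fintype.card F ^ i.val) := by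
    have hW : finrank F W.1 = k := mem_grassmannian.1 W.2
    simp only [spanOf, Subtype.ext_iff]
    rw [← Nat.card_congr (linearIndependentEquivSpanEq hW), card_linearIndependent hW.ge, hW]
  rw [← Nat.card_congr (Equiv.sigmaFiberEquiv spanOf), Nat.card_sigma]
  simp only [card_fiber, sum_const, card_univ, Fintype.card_coe, smul_eq_mul]

open scoped Classical in
theorem card_filter_mem_grassmannian_congr {v w : V} (hv : v ≠ 0) (hw : w ≠ 0) :
    #{W ∈ grassmannian F V k | v ∈ W} = #{W ∈ grassmannian F V k | w ∈ W} := by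
  obtain ⟨g, rfl⟩ := exists_linearEquiv_apply_eq (K := F) hv hw
  refine card_equiv (Submodule.orderIsoMapComap g).toEquiv fun W ↦ ?_
  simp [LinearEquiv.finrank_map_eq]

open scoped Classical in
theorem card_nonzero_mul_card_filter_mem_grassmannian [Fintype F] {v : V} (hv : v ≠ 0) :
    (Fintype.card F ^ finrank F V - 1) * #{W ∈ grassmannian F V k | v ∈ W} =
      #(grassmannian F V k) * (Fintype.card F ^ k - 1) := by
  have := Fintype.ofFinite V
  have card_nonzero : #(univ.erase (0 : V)) = Fintype.card F ^ finrank F V - 1 := by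
    rw [card_erase_of_mem (mem_univ 0), card_univ, Module.card_eq_pow_finrank (K := F)]
  rw [← card_nonzero]
  refine card_mul_eq_card_mul (fun w W ↦ w ∈ W) (fun w hw ↦ ?_) fun W hW ↦ ?_
  · exact card_filter_mem_grassmannian_congr (ne_of_mem_erase hw) hv
  · rw [bipartiteBelow, filter_erase, card_erase_of_mem (by simp), ← Fintype.card_subtype,
      Module.card_eq_pow_finrank (K := F), mem_grassmannian.1 hW]

open scoped Classical in
theorem card_filter_mem_grassmannian_mul_pow_le [Fintype F] (hk : k ≤ finrank F V) {v : V}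
    (hv : v ≠ 0) :
    #{W ∈ grassmannian F V k | v ∈ W} * Fintype.card F ^ (finrank F V - k) ≤
      #(grassmannian F V k) := by
  have key := card_nonzero_mul_card_filter_mem_grassmannian (F := F) (k := k) hv
  have filter_le : #{W ∈ grassmannian F V k | v ∈ W} ≤ #(grassmannian F V k) := card_filter_le _ _
  have hqk : 1 ≤ Fintype.card F ^ k := Nat.one_le_pow _ _ Fintype.card_pos
  have hqn : 1 ≤ Fintype.card F ^ finrank F V := Nat.one_le_pow _ _ Fintype.card_pos
  refine le_of_mul_le_mul_right ?_ hqk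
  rw [mul_assoc, ← pow_add, Nat.sub_add_cancel hk]
  zify [hqk, hqn] at key filter_le ⊢
  linarith

end DivisionRing

end Grassmannian

section QBinom

open Module Finset

theorem qBinom_pos {q n k : ℕ} (hq : 1 < q) (hkn : k ≤ n) : 0 < qBinom q n k := by
  have pow_sub_one_pos {j : ℕ} (hj : j ≠ 0) : (0 : ℝ) < (q : ℝ) ^ j - 1 :=
    sub_pos.2 (one_lt_pow₀ (by exact_mod_cast hq) hj)
  refine prod_pos fun i hi ↦ ?_
  have := mem_range.1 hi
  exact div_pos (pow_sub_one_pos (by omega)) (pow_sub_one_pos (by omega))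

theorem qBinom_eq_prod_div_prod {q n k : ℕ} (hq : 0 < q) (hkn : k ≤ n) :
    qBinom q n k = ((∏ i : Fin k, (q ^ n - q ^ i.val) : ℕ) : ℝ) /
      ((∏ i : Fin k, (q ^ k - q ^ i.val) : ℕ) : ℝ) := by
  rw [Fin.prod_univ_eq_prod_range (fun i ↦ q ^ n - q ^ i),
    Fin.prod_univ_eq_prod_range (fun i ↦ q ^ k - q ^ i), Nat.cast_prod, Nat.cast_prod,
    ← prod_div_distrib, qBinom]
  have cast_sub_factor {N i : ℕ} (hi : i ≤ N) :
      ((q ^ N - q ^ i : ℕ) : ℝ) = (q : ℝ) ^ i * ((q : ℝ) ^ (N - i) - 1) := by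
    rw [Nat.cast_sub (Nat.pow_le_pow_right hq hi), mul_sub, ← pow_add, Nat.add_sub_cancel' hi]
    push_cast
    ring
  refine prod_congr rfl fun i hi ↦ ?_
  have hik : i ≤ k := (mem_range.1 hi).le
  rw [cast_sub_factor hik, cast_sub_factor (hik.trans hkn), mul_div_mul_left _ _ (by positivity)]

theorem card_grassmannian {F V : Type*} [DivisionRing F] [Fintype F] [AddCommGroup V] [Module F V]
    [Finite V] {k : ℕ} (hk : k ≤ finrank F V) :
    (#(grassmannian F V k) : ℝ) = qBinom (Fintype.card F) (finrank F V) k := by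
  have hq : 1 < Fintype.card F := Fintype.one_lt_card
  have denominator_pos : 0 < ∏ i : Fin k, (Fintype.card F ^ k - Fintype.card F ^ i.val) :=
    prod_pos fun i _ ↦ Nat.sub_pos_of_lt (Nat.pow_lt_pow_right hq i.2)
  rw [qBinom_eq_prod_div_prod (by omega) hk, ← card_linearIndependent hk,
    card_linearIndependent_eq_card_grassmannian_mul, Nat.cast_mul, mul_div_cancel_right₀]
  exact_mod_cast denominator_pos.ne'

end QBinom

section Flats

open Module Finset

/-- A `k`-flat of `V`: a coset `v + W` of a `k`-dimensional subspace `W`. -/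
def IsFlat (F : Type*) {V : Type*} [DivisionRing F] [AddCommGroup V] [Module F V] (k : ℕ)
    (ℓ : Set V) : Prop :=
  ∃ (W : Submodule F V) (v : V), finrank F W = k ∧ ℓ = (fun x ↦ v + x) '' (W : Set V)

variable {F V : Type*} [DivisionRing F] [AddCommGroup V] [Module F V] {k : ℕ}

theorem IsFlat.exists_eq_preimage_mkQ {ℓ : Set V} (hℓ : IsFlat F k ℓ) :
    ∃ (W : Submodule F V) (c : V ⧸ W), finrank F W = k ∧ ℓ = W.mkQ ⁻¹' {c} := by
  obtain ⟨W, v, hW, rfl⟩ := hℓ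
  refine ⟨W, W.mkQ v, hW, ?_⟩
  ext x
  simp [Submodule.Quotient.eq, sub_eq_neg_add]

variable [Fintype V]

open scoped Classical in
theorem sum_isFlat_le_sum_cosets {L : Finset (Set V)} (hL : ∀ ℓ ∈ L, IsFlat F k ℓ)
    {f : Set V → ℝ} (hf : ∀ ℓ, 0 ≤ f ℓ) :
    ∑ ℓ ∈ L, f ℓ ≤ ∑ W ∈ grassmannian F V k, ∑ c : V ⧸ W, f (W.mkQ ⁻¹' {c}) := by
  let cosets : Finset (Σ W : Submodule F V, V ⧸ W) := (grassmannian F V k).sigma fun _ ↦ univ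
  let flat (p : Σ W : Submodule F V, V ⧸ W) : Set V := p.1.mkQ ⁻¹' {p.2}
  have subset_image : L ⊆ cosets.image flat := by
    intro ℓ hℓ
    obtain ⟨W, c, hW, rfl⟩ := (hL ℓ hℓ).exists_eq_preimage_mkQ
    exact mem_image.2 ⟨⟨W, c⟩, by simpa [cosets] using hW, rfl⟩
  calc ∑ ℓ ∈ L, f ℓ ≤ ∑ ℓ ∈ cosets.image flat, f ℓ :=
        sum_le_sum_of_subset_of_nonneg subset_image fun ℓ _ _ ↦ hf ℓ
    _ ≤ ∑ p ∈ cosets, f (flat p) := sum_image_le_of_nonneg fun ℓ _ ↦ hf ℓ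
    _ = _ := sum_sigma _ _ _

open scoped Classical in
theorem sum_sq_card_coset_sub_mean [Fintype F] (S : Finset V) {W : Submodule F V}
    (hW : finrank F W = k) :
    ∑ c : V ⧸ W, ((#{x ∈ S | W.mkQ x = c} : ℝ) -
        #S / (Fintype.card F : ℝ) ^ (finrank F V - k)) ^ 2 =
      #{p ∈ S ×ˢ S | p.1 - p.2 ∈ W} - (#S : ℝ) ^ 2 / (Fintype.card F : ℝ) ^ (finrank F V - k) := by
  have card_quotient :
      (Fintype.card (V ⧸ W) : ℝ) = (Fintype.card F : ℝ) ^ (finrank F V - k) := by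
    rw [Module.card_eq_pow_finrank (K := F), Submodule.finrank_quotient, hW, Nat.cast_pow]
  simpa only [card_quotient, Submodule.mkQ_apply, Submodule.Quotient.eq] using
    sum_sq_card_fiber_sub_mean S W.mkQ

end Flats

section RichFlats

open Module Finset

variable {F V : Type*} [DivisionRing F] [Fintype F] [AddCommGroup V] [Module F V] [Finite V]
  {k : ℕ}

open scoped Classical in
theorem sum_card_pairs_sub_mem_le (hk : k ≤ finrank F V) (S : Finset V) :
    ∑ W ∈ grassmannian F V k, (#{p ∈ S ×ˢ S | p.1 - p.2 ∈ W} : ℝ) ≤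
      #(grassmannian F V k) * (#S + (#S : ℝ) ^ 2 / (Fintype.card F : ℝ) ^ (finrank F V - k)) := by
  set G := grassmannian F V k
  set Q : ℝ := (Fintype.card F : ℝ) ^ (finrank F V - k)
  have hQ : 0 < Q := pow_pos (by exact_mod_cast Fintype.card_pos) _
  have card_directions_le (p : V × V) :
      (#{W ∈ G | p.1 - p.2 ∈ W} : ℝ) ≤ (if p.1 = p.2 then (#G : ℝ) else 0) + #G / Q := by
    split_ifs with h
    · have : (#{W ∈ G | p.1 - p.2 ∈ W} : ℝ) ≤ #G := by exact_mod_cast card_filter_le _ _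
      exact this.trans (le_add_of_nonneg_right (by positivity))
    · rw [zero_add, le_div_iff₀ hQ]
      have := card_filter_mem_grassmannian_mul_pow_le (F := F) hk (sub_ne_zero.2 h)
      simp only [Q, G]
      exact_mod_cast this
  calc ∑ W ∈ G, (#{p ∈ S ×ˢ S | p.1 - p.2 ∈ W} : ℝ)
      = ∑ p ∈ S ×ˢ S, (#{W ∈ G | p.1 - p.2 ∈ W} : ℝ) := by
        exact_mod_cast (sum_card_bipartiteAbove_eq_sum_card_bipartiteBelow
          fun (p : V × V) (W : Submodule F V) ↦ p.1 - p.2 ∈ W).symm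
    _ ≤ ∑ p ∈ S ×ˢ S, ((if p.1 = p.2 then (#G : ℝ) else 0) + #G / Q) :=
        sum_le_sum fun p _ ↦ card_directions_le p
    _ = #G * (#S + (#S : ℝ) ^ 2 / Q) := by
        rw [sum_add_distrib, sum_product]
        simp only [sum_ite_eq, sum_ite_mem, inter_self, sum_const, card_product, nsmul_eq_mul,
          Nat.cast_mul]
        ring

open scoped Classical in
theorem sum_isFlat_sq_card_sub_mean_le (hk : k ≤ finrank F V) (S : Finset V) {L : Finset (Set V)}
    (hL : ∀ ℓ ∈ L, IsFlat F k ℓ) :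
    ∑ ℓ ∈ L, ((#{x ∈ S | x ∈ ℓ} : ℝ) - #S / (Fintype.card F : ℝ) ^ (finrank F V - k)) ^ 2 ≤
      qBinom (Fintype.card F) (finrank F V) k * #S := by
  rw [← card_grassmannian hk]
  set G := grassmannian F V k
  set Q : ℝ := (Fintype.card F : ℝ) ^ (finrank F V - k)
  have := Fintype.ofFinite V
  calc ∑ ℓ ∈ L, ((#{x ∈ S | x ∈ ℓ} : ℝ) - #S / Q) ^ 2
      ≤ ∑ W ∈ G, ∑ c : V ⧸ W, ((#{x ∈ S | W.mkQ x = c} : ℝ) - #S / Q) ^ 2 :=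
        sum_isFlat_le_sum_cosets hL fun _ ↦ sq_nonneg _
    _ = ∑ W ∈ G, (#{p ∈ S ×ˢ S | p.1 - p.2 ∈ W} - (#S : ℝ) ^ 2 / Q) :=
        sum_congr rfl fun W hW ↦ sum_sq_card_coset_sub_mean S (mem_grassmannian.1 hW)
    _ = ∑ W ∈ G, (#{p ∈ S ×ˢ S | p.1 - p.2 ∈ W} : ℝ) - #G * ((#S : ℝ) ^ 2 / Q) := by
        rw [sum_sub_distrib, sum_const, nsmul_eq_mul]
    _ ≤ #G * (#S + (#S : ℝ) ^ 2 / Q) - #G * ((#S : ℝ) ^ 2 / Q) :=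
        sub_le_sub_right (sum_card_pairs_sub_mem_le hk S) _
    _ = #G * #S := by ring

open scoped Classical in
theorem sq_sub_mean_le_card_of_forall_le_card (hk : k ≤ finrank F V) {m : ℕ} {S : Finset V}
    {L : Finset (Set V)} (hflat : ∀ ℓ ∈ L, IsFlat F k ℓ) (hrich : ∀ ℓ ∈ L, m ≤ #{x ∈ S | x ∈ ℓ})
    (hL : qBinom (Fintype.card F) (finrank F V) k ≤ #L)
    (hm : #S / (Fintype.card F : ℝ) ^ (finrank F V - k) ≤ m) :
    (m - #S / (Fintype.card F : ℝ) ^ (finrank F V - k)) ^ 2 ≤ (#S : ℝ) := by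
  set μ : ℝ := #S / (Fintype.card F : ℝ) ^ (finrank F V - k)
  refine le_of_mul_le_mul_left ?_ (qBinom_pos (Fintype.one_lt_card (α := F)) hk)
  calc qBinom (Fintype.card F) (finrank F V) k * (m - μ) ^ 2
      ≤ #L * (m - μ) ^ 2 := by gcongr
    _ = ∑ ℓ ∈ L, (m - μ) ^ 2 := by rw [sum_const, nsmul_eq_mul]
    _ ≤ ∑ ℓ ∈ L, ((#{x ∈ S | x ∈ ℓ} : ℝ) - μ) ^ 2 := by
        refine sum_le_sum fun ℓ hℓ ↦ pow_le_pow_left₀ (sub_nonneg.2 hm) ?_ 2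
        exact sub_le_sub_right (by exact_mod_cast hrich ℓ hℓ) μ
    _ ≤ _ := sum_isFlat_sq_card_sub_mean_le hk S hflat

theorem one_sub_sqrt_div_mul_mul_le {m a s : ℝ} (hm : 0 < m) (ha : 0 < a)
    (h : s / a ≤ m → (m - s / a) ^ 2 ≤ s) : (1 - √(a / m)) * m * a ≤ s := by
  have sqrt_mul_eq : √(a / m) * m = √(m * a) := by
    rw [← Real.sqrt_sq hm.le, ← Real.sqrt_mul (by positivity), Real.sqrt_sq hm.le]
    congr 1
    field_simp
  rw [← le_div_iff₀ ha, sub_mul, one_mul, sqrt_mul_eq]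
  obtain hs | hs := le_total (s / a) m
  · have : m - s / a ≤ √(m * a) := Real.le_sqrt_of_sq_le ((h hs).trans ((div_le_iff₀ ha).1 hs))
    linarith
  · linarith [Real.sqrt_nonneg (m * a)]

open scoped Classical in
theorem pure_incidences_general (hk : k ≤ finrank F V) {m : ℕ} (hm : 0 < m) (S : Finset V)
    (L : Finset (Set V)) (hflat : ∀ ℓ ∈ L, IsFlat F k ℓ) (hrich : ∀ ℓ ∈ L, m ≤ #{x ∈ S | x ∈ ℓ})
    (hL : qBinom (Fintype.card F) (finrank F V) k ≤ #L) :
    (1 - √((Fintype.card F : ℝ) ^ (finrank F V - k) / m)) * m *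
      (Fintype.card F : ℝ) ^ (finrank F V - k) ≤ #S :=
  one_sub_sqrt_div_mul_mul_le (by exact_mod_cast hm)
    (pow_pos (by exact_mod_cast Fintype.card_pos) _)
    (sq_sub_mean_le_card_of_forall_le_card hk hflat hrich hL)

end RichFlats

open Classical in
/-- For `n/2 < k < n` and `q^{n−k} < m ≤ q^k`: if `L` is a set of `C(n,k)_q` distinct
`k`-flats, each containing at least `m` points of `S ⊆ F_q^n`, then
`|S| ≥ (1 − q^{n−2k} − √(q^{n−k}/m))·m·q^{n−k}`. -/
theorem pure_incidences {F : Type*} [Field F] [Fintype F] (q n k m : ℕ)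
    (hq : Fintype.card F = q) (hkn : k < n) (h2k : n < 2 * k)
    (hm1 : q ^ (n - k) < m) (hm2 : m ≤ q ^ k)
    (S : Finset (Fin n → F)) (L : Finset (Set (Fin n → F)))
    (hflat : ∀ ℓ ∈ L, ∃ (W : Submodule F (Fin n → F)) (v : Fin n → F),
      Module.finrank F W = k ∧ ℓ = (fun x => v + x) '' (W : Set (Fin n → F)))
    (hrich : ∀ ℓ ∈ L, m ≤ (S.filter (fun p => p ∈ ℓ)).card)
    (hL : (L.card : ℝ) = qBinom q n k) :
    (1 - (q : ℝ) ^ ((n : ℤ) - 2 * k) - Real.sqrt ((q : ℝ) ^ (n - k) / m)) *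
        m * (q : ℝ) ^ (n - k) ≤ S.card := by
  have general := pure_incidences_general (by simpa using hkn.le) (pos_of_gt hm1) S L hflat hrich
    (by simp [hL, hq])
  rw [Module.finrank_fin_fun, hq] at general
  refine le_trans ?_ general
  gcongr
  exact sub_le_self _ (by positivity)
end
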